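/- Let p ∈ (1, ∞). Let Φ be a Φ-function such that Φ ∈ (aInc)_p with constant a_Φ(p) and Φ ∈ (Dec)_q for some q ∈ [1, ∞). Then there exists a constant C depending only on p and Φ such that for every N ≥ 1, H ≥ 1, every N-dimensional subspace X_N ⊂ C(Ω) with X_N ∈ NI_{2,∞}(H), every ε ∈ (0, 1/2], and every natural number m ≥ C·ε^{-2}·(log ε^{-1})^{min{p,2}/2}·Φ(H^{2/min{p,2}})·(log 2N)²·log 2H², there is a set x = {x₁, …, x_m} ⊂ Ω of cardinality m such that a_Φ(1)^{-1}(1−ε)‖f‖_Φ ≤ ‖f‖_{Φ,x} ≤ a_Φ(1)(1+ε)‖f‖_Φ for all f ∈ X_N. -/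

import Mathlib

open MeasureTheory

noncomputable section

/-- The sup-norm (uniform norm) `‖f‖_∞ = sup_{x ∈ Ω} |f x|` of a real-valued function. -/
def supNorm {Ω : Type*} (f : Ω → ℝ) : ℝ := ⨆ x, |f x|

/-- The Luxemburg functional `‖f‖_Φ = inf {λ > 0 : ∫ Φ(|f|/λ) dμ ≤ 1}`. -/
def luxNorm {Ω : Type*} [MeasurableSpace Ω] (μ : Measure Ω) (Φ : ℝ → ℝ) (f : Ω → ℝ) : ℝ :=
  sInf {lam : ℝ | 0 < lam ∧ ∫ x, Φ (|f x| / lam) ∂μ ≤ 1}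

/-- The discrete Luxemburg functional `‖f‖_{Φ,x}` with respect to the uniform discrete
probability measure `(1/m) ∑_{j=1}^m δ_{x_j}`. -/
def discLuxNorm {Ω : Type*} (Φ : ℝ → ℝ) {m : ℕ} (x : Fin m → Ω) (f : Ω → ℝ) : ℝ :=
  sInf {lam : ℝ | 0 < lam ∧ (∑ j, Φ (|f (x j)| / lam)) / (m : ℝ) ≤ 1}

/-- The weighted discrete Luxemburg functional `‖f‖_{Φ,x,λ}` with respect to the discrete
probability measure `∑_{j=1}^m λ_j δ_{x_j}`. -/
def wDiscLuxNorm {Ω : Type*} (Φ : ℝ → ℝ) {m : ℕ} (x : Fin m → Ω) (w : Fin m → ℝ)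
    (f : Ω → ℝ) : ℝ :=
  sInf {lam : ℝ | 0 < lam ∧ (∑ j, w j * Φ (|f (x j)| / lam)) ≤ 1}

/-- `Φ : [0,∞) → [0,∞)` is a Φ-prefunction: increasing, `Φ(0) = 0`, `Φ(0+) = 0`,
`Φ(∞) = ∞` (stated for a function on `ℝ`, with the relevant conditions on `[0,∞)`). -/
structure IsPhiPrefun (Φ : ℝ → ℝ) : Prop where
  mono : MonotoneOn Φ (Set.Ici 0)
  map_zero : Φ 0 = 0
  nonneg : ∀ t : ℝ, 0 ≤ t → 0 ≤ Φ t
  tendsto_zero : Filter.Tendsto Φ (nhdsWithin 0 (Set.Ioi 0)) (nhds 0)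
  tendsto_atTop : Filter.Tendsto Φ Filter.atTop Filter.atTop

/-- `Φ ∈ (aInc)_p` with constant `a`: `t ↦ Φ(t) t^{-p}` is almost increasing on `(0,∞)`. -/
def AIncP (Φ : ℝ → ℝ) (p a : ℝ) : Prop :=
  ∀ s t : ℝ, 0 < s → s < t → Φ s / s ^ p ≤ a * (Φ t / t ^ p)

/-- `Φ ∈ (Inc)_p` : `t ↦ Φ(t) t^{-p}` is increasing on `(0,∞)`. -/
def IncP (Φ : ℝ → ℝ) (p : ℝ) : Prop :=
  ∀ s t : ℝ, 0 < s → s < t → Φ s / s ^ p ≤ Φ t / t ^ p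

/-- `Φ ∈ (Dec)_q` : `t ↦ Φ(t) t^{-q}` is decreasing on `(0,∞)`. -/
def DecQ (Φ : ℝ → ℝ) (q : ℝ) : Prop :=
  ∀ s t : ℝ, 0 < s → s < t → Φ t / t ^ q ≤ Φ s / s ^ q

/-- `Φ ∈ (aDec)_q` with constant `b`: `t ↦ Φ(t) t^{-q}` is almost decreasing on `(0,∞)`. -/
def ADecQ (Φ : ℝ → ℝ) (q b : ℝ) : Prop :=
  ∀ s t : ℝ, 0 < s → s < t → Φ t / t ^ q ≤ b * (Φ s / s ^ q)

/-- `t ↦ Φ(t) t^{-p}` is almost increasing with constant `a` on `(t_*, ∞)`. -/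
def AIncPOn (Φ : ℝ → ℝ) (p a tstar : ℝ) : Prop :=
  ∀ s t : ℝ, tstar < s → s < t → Φ s / s ^ p ≤ a * (Φ t / t ^ p)

/-- `t ↦ Φ(t) t^{-q}` is almost decreasing with constant `b` on `(t_*, ∞)`. -/
def ADecQOn (Φ : ℝ → ℝ) (q b tstar : ℝ) : Prop :=
  ∀ s t : ℝ, tstar < s → s < t → Φ t / t ^ q ≤ b * (Φ s / s ^ q)

/-- Entropy numbers `e_n(F, d)` of a set `F` with respect to a distance-like function `dd`:
the infimum of `ε > 0` such that `F` can be covered by `2^{2^n}` (one, for `n = 0`)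
`ε`-balls centered in `F`. -/
def entropyNumD {X : Type*} (dd : X → X → ℝ) (F : Set X) (n : ℕ) : ℝ :=
  sInf {ε : ℝ | 0 < ε ∧ ∃ T : Finset X, ↑T ⊆ F ∧
    T.card ≤ (if n = 0 then 1 else 2 ^ 2 ^ n) ∧ ∀ f ∈ F, ∃ g ∈ T, dd f g < ε}

/-- Sampling numbers `ϱ_m(F, ‖·‖)`: recovery by linear methods from samples at `m` points. -/
def sampNum {Ω : Type*} (nrm : (Ω → ℝ) → ℝ) (F : Set (Ω → ℝ)) (m : ℕ) : ℝ :=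
  sInf {r : ℝ | ∃ (x : Fin m → Ω) (T : (Fin m → ℝ) →ₗ[ℝ] (Ω → ℝ)),
    r = ⨆ f ∈ F, nrm (fun y => f y - T (fun j => f (x j)) y)}

/-- Modified sampling numbers `ϱ*_m(F, ‖·‖)`: recovery by arbitrary methods mapping into a
subspace of dimension at most `m`, from samples at `m` points. -/
def sampNumStar {Ω : Type*} (nrm : (Ω → ℝ) → ℝ) (F : Set (Ω → ℝ)) (m : ℕ) : ℝ :=
  sInf {r : ℝ | ∃ (x : Fin m → Ω) (Y : Submodule ℝ (Ω → ℝ)), Module.finrank ℝ Y ≤ m ∧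
    ∃ T : (Fin m → ℝ) → Ω → ℝ, (∀ v, T v ∈ Y) ∧
    r = ⨆ f ∈ F, nrm (fun y => f y - T (fun j => f (x j)) y)}

/-- Kolmogorov width `d_N(F, ‖·‖_∞)` : infimum over `N`-dimensional subspaces of `C(Ω)` of the
worst-case best approximation error in the uniform norm. -/
def kolWidth {Ω : Type*} [TopologicalSpace Ω] (F : Set (Ω → ℝ)) (N : ℕ) : ℝ :=
  sInf {r : ℝ | ∃ X : Submodule ℝ (Ω → ℝ), Module.finrank ℝ X = N ∧
    (∀ u ∈ X, Continuous u) ∧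
    r = ⨆ f ∈ F, sInf ((fun u => supNorm (fun y => f y - u y)) '' (X : Set (Ω → ℝ)))}

end

/-!
Point evaluations on `X` are bounded in `L_2(μ)`, so by Riesz representation `X` consists of the
functions `⟪u, z⟫` with `z` in a Euclidean space, `‖u‖ ≤ H` and `∫ ⟪u, z⟫ ^ 2 = ‖z‖ ^ 2`. By
Nikol'skii's inequality the functions with `∫ Φ |f| ≤ 1` are bounded by a multiple of
`H ^ (2 / θ)`, where `θ = min p 2`. For independent random points `x j`, symmetrization compares
the largest deviation of `∑ j, Φ |f (x j)|` from its mean with a Rademacher process over a fixed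
sample. The growth conditions bound the increments of that process by the seminorm of
`L_r(μ + μ_x)`, where `μ_x` is the empirical measure and `r` is of order `log (2 H ^ 2)`; this
seminorm is as good as the uniform one, but its mean over a Gaussian vector is at most of order
`√r * H` whatever the dimension. Dudley's chaining, with the dual Sudakov inequality at the
`O(log (2 N))` coarse scales and a comparison of volumes at the fine ones, bounds the process by
`√(Q * S)` if all sums `∑ j, Φ |f (x j)|` are at most `S`. Since `S` exceeds the number `m` of
points by at most the deviation itself, the expected deviation is at most `ε * m` once `m` is at
least a multiple of `Q / ε ^ 2`, and compactness extends this from finite families to all `f`.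
Finally, the almost monotonicity of `Φ t / t` turns closeness of means into closeness of
Luxemburg functionals.
-/

/-! ### Rademacher averages -/

section Rademacher

open Finset
open scoped BigOperators

variable {κ ι : Type*}

lemma expect_le_of_expect_exp_le {s : Finset ι} {g : ι → ℝ} {a : ℝ} (hs : s.Nonempty)
    (h : 𝔼 i ∈ s, Real.exp (g i) ≤ Real.exp a) : 𝔼 i ∈ s, g i ≤ a := by
  have hpoint (i : ι) : g i ≤ Real.exp (-a) * Real.exp (g i) + (a - 1) := by
    rw [← Real.exp_add]
    linarith [Real.add_one_le_exp (-a + g i)]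
  calc 𝔼 i ∈ s, g i
      ≤ 𝔼 i ∈ s, (Real.exp (-a) * Real.exp (g i) + (a - 1)) :=
        expect_le_expect fun i _ => hpoint i
    _ = Real.exp (-a) * 𝔼 i ∈ s, Real.exp (g i) + (a - 1) := by
        rw [expect_add_distrib, ← mul_expect, expect_const hs]
    _ ≤ Real.exp (-a) * Real.exp a + (a - 1) := by gcongr
    _ = a := by rw [← Real.exp_add, neg_add_cancel, Real.exp_zero]; ring

variable [Fintype κ]

/-- The Rademacher sum `∑ j, e j * v j`, as a linear functional of the coefficients `v`; a choice
of signs is a function into `ℤˣ`. -/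
noncomputable def rademacherSum (e : κ → ℤˣ) : (κ → ℝ) →ₗ[ℝ] ℝ where
  toFun v := ∑ j, ((e j : ℤ) : ℝ) * v j
  map_add' v w := by simp only [Pi.add_apply, mul_add, sum_add_distrib]
  map_smul' c v := by
    simp only [Pi.smul_apply, smul_eq_mul, mul_sum, RingHom.id_apply, mul_left_comm]

lemma rademacherSum_apply (e : κ → ℤˣ) (v : κ → ℝ) :
    rademacherSum e v = ∑ j, ((e j : ℤ) : ℝ) * v j := rfl

lemma abs_rademacherSum_le (e : κ → ℤˣ) (v : κ → ℝ) : |rademacherSum e v| ≤ ∑ j, |v j| := by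
  rw [rademacherSum_apply]
  refine (abs_sum_le_sum_abs _ _).trans_eq (sum_congr rfl fun j _ => ?_)
  rcases Int.units_eq_one_or (e j) with h | h <;> simp [h]

variable [DecidableEq κ]

lemma expect_exp_rademacherSum_le (v : κ → ℝ) :
    𝔼 e, Real.exp (rademacherSum e v) ≤ Real.exp ((∑ j, v j ^ 2) / 2) := by
  have hsum : ∑ e : κ → ℤˣ, Real.exp (rademacherSum e v) = ∏ j, (2 * Real.cosh (v j)) := by
    simp_rw [rademacherSum_apply, Real.exp_sum]
    rw [← Fintype.piFinset_univ,
      ← prod_univ_sum (fun _ => univ) fun j (u : ℤˣ) => Real.exp (((u : ℤ) : ℝ) * v j)]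
    refine prod_congr rfl fun j _ => ?_
    rw [show (univ : Finset ℤˣ) = {1, -1} from rfl, sum_pair (by decide), Real.cosh_eq]
    simp [mul_div_cancel₀]
  have hcard : Fintype.card (κ → ℤˣ) = 2 ^ Fintype.card κ := by
    rw [Fintype.card_fun, Fintype.card_units_int]
  rw [Fintype.expect_eq_sum_div_card, hsum, prod_mul_distrib, prod_const, card_univ, hcard,
    Nat.cast_pow, Nat.cast_ofNat, mul_div_cancel_left₀ _ (by positivity), sum_div, Real.exp_sum]
  exact prod_le_prod (fun j _ => (Real.cosh_pos _).le) fun j _ => Real.cosh_le_exp_half_sq _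

lemma expect_exp_abs_rademacherSum_le (v : κ → ℝ) :
    𝔼 e, Real.exp |rademacherSum e v| ≤ 2 * Real.exp ((∑ j, v j ^ 2) / 2) :=
  calc 𝔼 e, Real.exp |rademacherSum e v|
      ≤ 𝔼 e, (Real.exp (rademacherSum e v) + Real.exp (rademacherSum e (-v))) :=
        expect_le_expect fun e _ => by rw [map_neg]; exact Real.exp_abs_le _
    _ ≤ 2 * Real.exp ((∑ j, v j ^ 2) / 2) := by
        rw [expect_add_distrib, two_mul]
        refine add_le_add (expect_exp_rademacherSum_le v) ?_
        simpa only [Pi.neg_apply, neg_sq] using expect_exp_rademacherSum_le (-v)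

/-- Massart's finite class lemma. -/
lemma expect_sup'_abs_rademacherSum_le {T : Finset ι} (hT : T.Nonempty) {v : ι → κ → ℝ}
    {s l : ℝ} (hs : 0 < s) (hl : 0 < l) (hv : ∀ i ∈ T, ∑ j, v i j ^ 2 ≤ s ^ 2)
    (hcard : 2 * (#T : ℝ) ≤ Real.exp l) :
    𝔼 e, T.sup' hT (fun i => |rademacherSum e (v i)|) ≤ s * √(2 * l) := by
  set c : ℝ := √(2 * l) / s with hc
  have hc0 : 0 < c := by positivity
  have hcs : c ^ 2 * s ^ 2 = 2 * l := by
    rw [hc, div_pow, Real.sq_sqrt (by positivity), div_mul_cancel₀ _ (by positivity)]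
  have hterm : ∀ i ∈ T, 𝔼 e, Real.exp |rademacherSum e (c • v i)| ≤ 2 * Real.exp l := fun i hi => by
    refine (expect_exp_abs_rademacherSum_le _).trans ?_
    simp only [Pi.smul_apply, smul_eq_mul, mul_pow, ← mul_sum]
    gcongr
    linarith [mul_le_mul_of_nonneg_left (hv i hi) (sq_nonneg c)]
  have hsup (e : κ → ℤˣ) : Real.exp (c * T.sup' hT fun i => |rademacherSum e (v i)|) ≤
      ∑ i ∈ T, Real.exp |rademacherSum e (c • v i)| := by
    obtain ⟨i, hi, hmax⟩ := exists_mem_eq_sup' hT fun i => |rademacherSum e (v i)|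
    rw [hmax, ← abs_of_pos hc0, ← abs_mul, ← smul_eq_mul, ← map_smul, abs_of_pos hc0]
    exact single_le_sum (f := fun i => Real.exp |rademacherSum e (c • v i)|)
      (fun _ _ => (Real.exp_pos _).le) hi
  have hexp : 𝔼 e, Real.exp (c * T.sup' hT fun i => |rademacherSum e (v i)|)
      ≤ Real.exp (2 * l) :=
    calc _ ≤ 𝔼 e, ∑ i ∈ T, Real.exp |rademacherSum e (c • v i)| :=
          expect_le_expect fun e _ => hsup e
      _ ≤ #T * (2 * Real.exp l) := by
          rw [expect_sum_comm, ← nsmul_eq_mul]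
          exact sum_le_card_nsmul _ _ _ hterm
      _ ≤ Real.exp l * Real.exp l := by
          nlinarith [Real.exp_pos l]
      _ = Real.exp (2 * l) := by rw [two_mul, Real.exp_add]
  have := expect_le_of_expect_exp_le univ_nonempty hexp
  rw [← mul_expect] at this
  refine le_of_mul_le_mul_left (this.trans_eq ?_) hc0
  rw [hc, div_mul_eq_mul_div, mul_left_comm, mul_div_cancel_left₀ _ hs.ne',
    Real.mul_self_sqrt (by positivity)]

end Rademacher

/-! ### Nets and chaining -/

section Chaining

open Finset
open scoped BigOperators

lemma expect_sup'_abs_rademacherSum_le_add {α κ : Type*} [DecidableEq α] [Fintype κ]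
    [DecidableEq κ] {F : Finset α} {φ : α → κ → ℝ} (hF : F.Nonempty) (π π' : α → α)
    {s l : ℝ} (hs : 0 < s) (hl : 0 ≤ l)
    (hφ : ∀ f ∈ F, ∑ j, (φ (π' f) - φ (π f)) j ^ 2 ≤ s ^ 2)
    (hcard : (#(F.image fun f => (π' f, π f)) : ℝ) ≤ Real.exp l) :
    𝔼 e, F.sup' hF (fun f => |rademacherSum e (φ (π' f))|) ≤
      𝔼 e, F.sup' hF (fun f => |rademacherSum e (φ (π f))|) + s * √(2 * (1 + l)) := by
  set links := F.image fun f => (π' f, π f)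
  have hlinks : links.Nonempty := hF.image _
  have htriangle (e : κ → ℤˣ) : F.sup' hF (fun f => |rademacherSum e (φ (π' f))|) ≤
      F.sup' hF (fun f => |rademacherSum e (φ (π f))|) +
        links.sup' hlinks fun x => |rademacherSum e (φ x.1 - φ x.2)| := by
    refine sup'_le _ _ fun f hf => ?_
    calc |rademacherSum e (φ (π' f))|
        = |rademacherSum e (φ (π f)) + rademacherSum e (φ (π' f) - φ (π f))| := by
          rw [← map_add, add_sub_cancel]
      _ ≤ |rademacherSum e (φ (π f))| + |rademacherSum e (φ (π' f) - φ (π f))| := abs_add_le _ _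
      _ ≤ _ := add_le_add (le_sup' (fun f => |rademacherSum e (φ (π f))|) hf)
          (le_sup' (fun x : α × α => |rademacherSum e (φ x.1 - φ x.2)|)
            (mem_image_of_mem (fun f => (π' f, π f)) hf))
  have hmassart : 𝔼 e, links.sup' hlinks (fun x => |rademacherSum e (φ x.1 - φ x.2)|) ≤
      s * √(2 * (1 + l)) := by
    refine expect_sup'_abs_rademacherSum_le hlinks hs (by linarith) (fun x hx => ?_) ?_
    · obtain ⟨f, hf, rfl⟩ := mem_image.mp hx
      exact hφ f hf
    · rw [Real.exp_add]
      have := Real.add_one_le_exp (1 : ℝ)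
      gcongr
      linarith
  refine (expect_le_expect fun e _ => htriangle e).trans ?_
  rw [expect_add_distrib]
  gcongr

variable {E 𝓕 : Type*} [AddCommGroup E] [FunLike 𝓕 E ℝ]

/-- Local entropy bound: a `t'`-separated subset of `F` which is contained in a `ρ`-ball of radius
`t` around a point of `F` has at most `b` elements. -/
def LocalPackingLE (ρ : 𝓕) (F : Finset E) (t t' b : ℝ) : Prop :=
  ∀ g ∈ F, ∀ S ⊆ F, (∀ f ∈ S, ρ (f - g) ≤ t) →
    (S : Set E).Pairwise (fun f f' => t' < ρ (f - f')) → (#S : ℝ) ≤ b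

/-- A map of `F` to itself which moves every point by at most `t`; its image is a `t`-net. -/
structure IsNetMap (ρ : 𝓕) (F : Finset E) (t : ℝ) (π : E → E) : Prop where
  mem : ∀ f ∈ F, π f ∈ F
  map_sub_le : ∀ f ∈ F, ρ (f - π f) ≤ t

lemma expect_sup'_abs_rademacherSum_le_add_of_isNetMap {κ : Type*} [Fintype κ] [DecidableEq κ]
    {ρ : 𝓕} {F : Finset E} {φ : E → κ → ℝ} (hF : F.Nonempty) {π : E → E} {r d : ℝ}
    (hπ : IsNetMap ρ F r π) (hd : 0 ≤ d)
    (hinc : ∀ f ∈ F, ∀ g ∈ F, ρ (f - g) ≤ r → ∑ j, (φ f - φ g) j ^ 2 ≤ d ^ 2) :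
    𝔼 e, F.sup' hF (fun f => |rademacherSum e (φ f)|) ≤
      𝔼 e, F.sup' hF (fun f => |rademacherSum e (φ (π f))|) + Fintype.card κ * d := by
  have hsup (e : κ → ℤˣ) : F.sup' hF (fun f => |rademacherSum e (φ f)|) ≤
      F.sup' hF (fun f => |rademacherSum e (φ (π f))|) + Fintype.card κ * d := by
    refine sup'_le _ _ fun f hf => ?_
    have hcoord (j : κ) : |(φ f - φ (π f)) j| ≤ d :=
      abs_le_of_sq_le_sq ((single_le_sum (f := fun j => (φ f - φ (π f)) j ^ 2)
        (fun _ _ => sq_nonneg _) (mem_univ j)).trans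
          (hinc f hf _ (hπ.mem f hf) (hπ.map_sub_le f hf))) hd
    calc |rademacherSum e (φ f)|
        = |rademacherSum e (φ (π f)) + rademacherSum e (φ f - φ (π f))| := by
          rw [← map_add, add_sub_cancel]
      _ ≤ |rademacherSum e (φ (π f))| + ∑ j, |(φ f - φ (π f)) j| :=
          (abs_add_le _ _).trans (by gcongr; exact abs_rademacherSum_le _ _)
      _ ≤ _ := add_le_add (le_sup' (fun f => |rademacherSum e (φ (π f))|) hf)
          ((sum_le_card_nsmul _ _ _ fun j _ => hcoord j).trans_eq (nsmul_eq_mul _ _))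
  refine (expect_le_expect fun e _ => hsup e).trans ?_
  rw [expect_add_distrib, Fintype.expect_const]

variable [AddGroupSeminormClass 𝓕 E ℝ] {ρ : 𝓕} {F : Finset E}

lemma exists_pairwise_separated_net (ρ : 𝓕) (F : Finset E) {t : ℝ} (ht : 0 ≤ t) :
    ∃ S ⊆ F, (S : Set E).Pairwise (fun f f' => t < ρ (f - f')) ∧
      ∀ f ∈ F, ∃ s ∈ S, ρ (f - s) ≤ t := by
  classical
  obtain ⟨S, hS, hmax⟩ := exists_max_image
    (F.powerset.filter fun S : Finset E => (S : Set E).Pairwise fun f f' => t < ρ (f - f')) card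
    ⟨∅, by simp⟩
  simp only [mem_filter, mem_powerset] at hS hmax
  refine ⟨S, hS.1, hS.2, fun f hf => ?_⟩
  by_contra! hfar
  have hfS : f ∉ S := fun h => by
    have := hfar f h
    rw [sub_self, map_zero] at this
    exact this.not_ge ht
  have hsep : ((insert f S : Finset E) : Set E).Pairwise fun f f' => t < ρ (f - f') := by
    rw [coe_insert]
    exact hS.2.insert fun s hs _ => ⟨hfar s hs, map_sub_rev ρ f s ▸ hfar s hs⟩
  have := hmax (insert f S) ⟨insert_subset hf hS.1, hsep⟩
  rw [card_insert_of_notMem hfS] at this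
  omega

lemma IsNetMap.map_sub_map_le {t t' : ℝ} {π π' : E → E} (hπ : IsNetMap ρ F t π)
    (hπ' : IsNetMap ρ F t' π') {f : E} (hf : f ∈ F) : ρ (π' f - π f) ≤ t + t' := by
  rw [← sub_sub_sub_cancel_left (π f) (π' f) f]
  exact (map_sub_le_add ρ _ _).trans (add_le_add (hπ.map_sub_le f hf) (hπ'.map_sub_le f hf))

/-- Each fibre of `π` lies in a ball of radius `t`, so it has a `t'`-net of at most `b` points;
gluing these nets bounds the number of links `(π' f, π f)`. -/
lemma IsNetMap.exists_refinement [DecidableEq E] {t t' b : ℝ} {π : E → E}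
    (hπ : IsNetMap ρ F t π) (ht' : 0 ≤ t') (hent : LocalPackingLE ρ F t t' b) :
    ∃ π', IsNetMap ρ F t' π' ∧ (#(F.image fun f => (π' f, π f)) : ℝ) ≤ #(F.image π) * b := by
  choose S hSF hSsep hSnet using fun g =>
    exists_pairwise_separated_net ρ (F.filter fun f => π f = g) ht'
  choose! π' hπ'S hπ'ρ using fun f (hf : f ∈ F) =>
    hSnet (π f) f (mem_filter.mpr ⟨hf, rfl⟩)
  refine ⟨π', ⟨fun f hf => (mem_filter.mp (hSF _ (hπ'S f hf))).1, hπ'ρ⟩, ?_⟩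
  have hsub : F.image (fun f => (π' f, π f)) ⊆
      (F.image π).biUnion fun g => (S g).image fun s => (s, g) := fun x hx => by
    obtain ⟨f, hf, rfl⟩ := mem_image.mp hx
    exact mem_biUnion.mpr ⟨π f, mem_image_of_mem _ hf, mem_image_of_mem _ (hπ'S f hf)⟩
  have hfibre : ∀ g ∈ F.image π, (#((S g).image fun s => (s, g)) : ℝ) ≤ b := fun g hg => by
    obtain ⟨f₀, hf₀, rfl⟩ := mem_image.mp hg
    refine (Nat.cast_le.mpr card_image_le).trans (hent (π f₀) (hπ.mem f₀ hf₀) (S (π f₀))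
      ((hSF _).trans (filter_subset _ _)) (fun f hf => ?_) (hSsep _))
    obtain ⟨hfF, hfπ⟩ := mem_filter.mp (hSF _ hf)
    exact hfπ ▸ hπ.map_sub_le f hfF
  calc (#(F.image fun f => (π' f, π f)) : ℝ)
      ≤ ∑ g ∈ F.image π, (#((S g).image fun s => (s, g)) : ℝ) := by
        exact_mod_cast (card_le_card hsub).trans card_biUnion_le
    _ ≤ #(F.image π) * b := by
        rw [← nsmul_eq_mul]
        exact sum_le_card_nsmul _ _ _ hfibre

variable {κ : Type*} [Fintype κ] [DecidableEq κ] {φ : E → κ → ℝ} {t a D : ℕ → ℝ}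

lemma exists_isNetMap_expect_sup'_le (hF : F.Nonempty) (hF₀ : 0 ∈ F) (hφ₀ : φ 0 = 0)
    (ht : ∀ k, 0 ≤ t k) (htanti : Antitone t) (ha : ∀ k, 0 ≤ a k) (hD : ∀ k, 0 < D k)
    (hstart : ∀ f ∈ F, ρ f ≤ t 0)
    (hent : ∀ k, LocalPackingLE ρ F (t k) (t (k + 1)) (Real.exp (a k)))
    (hinc : ∀ k, ∀ f ∈ F, ∀ g ∈ F, ρ (f - g) ≤ 2 * t k → ∑ j, (φ f - φ g) j ^ 2 ≤ D k ^ 2)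
    (n : ℕ) :
    ∃ π, IsNetMap ρ F (t n) π ∧ 𝔼 e, F.sup' hF (fun f => |rademacherSum e (φ (π f))|) ≤
      ∑ k ∈ range n, D k * √(2 * (1 + ∑ i ∈ range (k + 1), a i)) := by
  classical
  suffices ∃ π, IsNetMap ρ F (t n) π ∧ (#(F.image π) : ℝ) ≤ Real.exp (∑ i ∈ range n, a i) ∧
      𝔼 e, F.sup' hF (fun f => |rademacherSum e (φ (π f))|) ≤
        ∑ k ∈ range n, D k * √(2 * (1 + ∑ i ∈ range (k + 1), a i)) from
    this.imp fun _ h => ⟨h.1, h.2.2⟩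
  induction n with
  | zero =>
    refine ⟨0, ⟨fun _ _ => hF₀, by simpa using hstart⟩, ?_, ?_⟩
    · simp [Pi.zero_def, image_const hF]
    · simp [hφ₀]
  | succ n ih =>
    obtain ⟨π, hπ, hcard, hsum⟩ := ih
    obtain ⟨π', hπ', hlinks⟩ := hπ.exists_refinement (ht (n + 1)) (hent n)
    have hlinks' : (#(F.image fun f => (π' f, π f)) : ℝ) ≤
        Real.exp (∑ i ∈ range (n + 1), a i) := by
      rw [sum_range_succ, Real.exp_add]
      exact hlinks.trans (by gcongr)
    have himage : #(F.image π') ≤ #(F.image fun f => (π' f, π f)) := by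
      rw [show F.image π' = (F.image fun f => (π' f, π f)).image Prod.fst from by
        rw [image_image]; rfl]
      exact card_image_le
    refine ⟨π', hπ', (Nat.cast_le.mpr himage).trans hlinks', ?_⟩
    rw [sum_range_succ]
    refine (expect_sup'_abs_rademacherSum_le_add hF π π' (hD n)
      (sum_nonneg fun i _ => ha i) (fun f hf => ?_) hlinks').trans (by gcongr)
    refine hinc n _ (hπ'.mem f hf) _ (hπ.mem f hf) ((hπ.map_sub_map_le hπ' hf).trans ?_)
    linarith [htanti n.le_succ]

/-- Dudley's entropy bound. -/
lemma expect_sup'_abs_rademacherSum_le_of_localPackingLE (hF : F.Nonempty) (hF₀ : 0 ∈ F)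
    (hφ₀ : φ 0 = 0) (ht : ∀ k, 0 ≤ t k) (htanti : Antitone t) (ha : ∀ k, 0 ≤ a k)
    (hD : ∀ k, 0 < D k) (hDlim : Filter.Tendsto D Filter.atTop (nhds 0))
    (hstart : ∀ f ∈ F, ρ f ≤ t 0)
    (hent : ∀ k, LocalPackingLE ρ F (t k) (t (k + 1)) (Real.exp (a k)))
    (hinc : ∀ k, ∀ f ∈ F, ∀ g ∈ F, ρ (f - g) ≤ 2 * t k → ∑ j, (φ f - φ g) j ^ 2 ≤ D k ^ 2)
    {B : ℝ} (hB : ∀ n, ∑ k ∈ range n, D k * √(2 * (1 + ∑ i ∈ range (k + 1), a i)) ≤ B) :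
    𝔼 e, F.sup' hF (fun f => |rademacherSum e (φ f)|) ≤ B := by
  have hlevel (n : ℕ) :
      𝔼 e, F.sup' hF (fun f => |rademacherSum e (φ f)|) ≤ B + Fintype.card κ * D n := by
    obtain ⟨π, hπ, hsum⟩ :=
      exists_isNetMap_expect_sup'_le hF hF₀ hφ₀ ht htanti ha hD hstart hent hinc n
    refine (expect_sup'_abs_rademacherSum_le_add_of_isNetMap hF hπ (hD n).le
      fun f hf g hg h => hinc n f hf g hg (by linarith [ht n])).trans ?_
    gcongr
    exact hsum.trans (hB n)
  simpa using ge_of_tendsto' ((hDlim.const_mul (Fintype.card κ : ℝ)).const_add B) hlevel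

end Chaining

section GeometricWeights

open Finset

variable {β : ℝ}

lemma one_add_sum_range_pow_le (hβ : 2 ≤ β) (k : ℕ) : 1 + ∑ i ∈ range k, β ^ i ≤ β ^ k := by
  induction k with
  | zero => simp
  | succ k ih =>
    rw [sum_range_succ, pow_succ]
    nlinarith [pow_pos (show 0 < β by linarith) k]

lemma one_add_sum_range_pow_min_le (hβ : 2 ≤ β) (hβ4 : β ≤ 4) (K j : ℕ) :
    1 + ∑ i ∈ range (K + j + 1), β ^ min i K ≤ β ^ K * (4 + j) := by
  have hhead : 1 + ∑ i ∈ range (K + 1), β ^ min i K ≤ β ^ K * 4 := by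
    rw [sum_congr rfl fun i hi => by rw [min_eq_left (Nat.lt_succ_iff.mp (mem_range.mp hi))]]
    refine (one_add_sum_range_pow_le hβ (K + 1)).trans ?_
    rw [pow_succ]
    gcongr
  have htail : ∑ i ∈ range j, β ^ min (K + 1 + i) K = j * β ^ K := by
    rw [sum_congr rfl fun i _ => by rw [min_eq_right (by omega)], sum_const, card_range,
      nsmul_eq_mul]
  rw [add_right_comm, sum_range_add, htail]
  linarith

lemma sqrt_geometric_weight_le_two (hβ : 2 ≤ β) (hβ4 : β ≤ 4) {k K : ℕ} (hk : k < K) :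
    √(β⁻¹ ^ k * (1 + ∑ i ∈ range (k + 1), β ^ min i K)) ≤ 2 := by
  rw [Real.sqrt_le_left (by norm_num), inv_pow, inv_mul_le_iff₀ (by positivity),
    sum_congr rfl fun i hi => by
      rw [min_eq_left ((Nat.lt_succ_iff.mp (mem_range.mp hi)).trans hk.le)]]
  refine (one_add_sum_range_pow_le hβ (k + 1)).trans ?_
  rw [pow_succ]
  gcongr
  linarith

lemma sqrt_geometric_weight_add_le (hβ : 2 ≤ β) (hβ4 : β ≤ 4) (K j : ℕ) :
    √(β⁻¹ ^ (K + j) * (1 + ∑ i ∈ range (K + j + 1), β ^ min i K)) ≤ 4 * (3 / 4) ^ j := by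
  have hbernoulli : 4 + (j : ℝ) ≤ 16 * (9 / 8) ^ j := by
    have := one_add_mul_le_pow (show (-2 : ℝ) ≤ 1 / 8 by norm_num) j
    norm_num at this
    linarith [Nat.cast_nonneg (α := ℝ) j]
  rw [Real.sqrt_le_left (by positivity)]
  calc β⁻¹ ^ (K + j) * (1 + ∑ i ∈ range (K + j + 1), β ^ min i K)
      ≤ β⁻¹ ^ (K + j) * (β ^ K * (4 + j)) := by
        gcongr
        exact one_add_sum_range_pow_min_le hβ hβ4 K j
    _ = β⁻¹ ^ j * (4 + j) := by
        rw [pow_add, inv_pow β K]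
        field_simp
    _ ≤ 2⁻¹ ^ j * (16 * (9 / 8) ^ j) := by gcongr
    _ = (4 * (3 / 4) ^ j) ^ 2 := by
        rw [mul_pow, ← pow_mul, mul_comm j 2, pow_mul, mul_left_comm, ← mul_pow]
        norm_num

lemma sum_sqrt_geometric_weight_le (hβ : 2 ≤ β) (hβ4 : β ≤ 4) (K n : ℕ) :
    ∑ k ∈ range n, √(β⁻¹ ^ k * (1 + ∑ i ∈ range (k + 1), β ^ min i K)) ≤ 2 * K + 16 := by
  calc ∑ k ∈ range n, √(β⁻¹ ^ k * (1 + ∑ i ∈ range (k + 1), β ^ min i K))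
      ≤ ∑ k ∈ range (K + n), √(β⁻¹ ^ k * (1 + ∑ i ∈ range (k + 1), β ^ min i K)) :=
        sum_le_sum_of_subset_of_nonneg (range_mono (by omega)) fun _ _ _ => Real.sqrt_nonneg _
    _ ≤ ∑ _k ∈ range K, (2 : ℝ) + ∑ j ∈ range n, 4 * (3 / 4 : ℝ) ^ j := by
        rw [sum_range_add]
        exact add_le_add
          (sum_le_sum fun k hk => sqrt_geometric_weight_le_two hβ hβ4 (mem_range.mp hk))
          (sum_le_sum fun j _ => sqrt_geometric_weight_add_le hβ hβ4 K j)
    _ ≤ 2 * K + 16 := by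
        have hgeom : ∑ j ∈ range n, (3 / 4 : ℝ) ^ j ≤ (1 - 3 / 4)⁻¹ := by
          rw [← tsum_geometric_of_lt_one (by norm_num) (by norm_num)]
          exact (summable_geometric_of_lt_one (by norm_num) (by norm_num)).sum_le_tsum _
            fun _ _ => by positivity
        rw [sum_const, card_range, nsmul_eq_mul, ← mul_sum]
        linarith

end GeometricWeights

section GeometricChaining

open Finset
open scoped BigOperators

/-- Dudley's bound when the entropy grows like `β ^ k` up to the scale `K` and the increments
decay like `β⁻¹ ^ k`: each of the first `K` scales contributes `O(1)` and the others a convergent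
series. -/
lemma expect_sup'_abs_rademacherSum_le_of_geometric {E 𝓕 κ : Type*} [AddCommGroup E]
    [FunLike 𝓕 E ℝ] [AddGroupSeminormClass 𝓕 E ℝ] [Fintype κ] [DecidableEq κ] {ρ : 𝓕}
    {F : Finset E} {φ : E → κ → ℝ} {t : ℕ → ℝ} {β c s : ℝ} {K : ℕ} (hF : F.Nonempty)
    (hF₀ : 0 ∈ F) (hφ₀ : φ 0 = 0) (ht : ∀ k, 0 ≤ t k) (htanti : Antitone t)
    (hβ : 2 ≤ β) (hβ4 : β ≤ 4) (hc : 1 ≤ c) (hs : 0 < s) (hstart : ∀ f ∈ F, ρ f ≤ t 0)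
    (hent : ∀ k, LocalPackingLE ρ F (t k) (t (k + 1)) (Real.exp (c * β ^ min k K)))
    (hinc : ∀ k, ∀ f ∈ F, ∀ g ∈ F, ρ (f - g) ≤ 2 * t k →
      ∑ j, (φ f - φ g) j ^ 2 ≤ s ^ 2 * β⁻¹ ^ k) :
    𝔼 e, F.sup' hF (fun f => |rademacherSum e (φ f)|) ≤ s * √(2 * c) * (2 * K + 16) := by
  have hβ0 : 0 < β := by linarith
  have hlim : Filter.Tendsto (fun k : ℕ => s * √(β⁻¹ ^ k)) Filter.atTop (nhds 0) := by
    have := (tendsto_pow_atTop_nhds_zero_of_lt_one (inv_nonneg.mpr hβ0.le)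
      (inv_lt_one_of_one_lt₀ (by linarith : 1 < β))).sqrt.const_mul s
    rwa [Real.sqrt_zero, mul_zero] at this
  refine expect_sup'_abs_rademacherSum_le_of_localPackingLE hF hF₀ hφ₀ ht htanti
    (fun k => by positivity) (fun k => by positivity) hlim hstart hent
    (fun k f hf g hg h => ?_) fun n => ?_
  · rw [mul_pow, Real.sq_sqrt (by positivity)]
    exact hinc k f hf g hg h
  refine le_trans ?_ (mul_le_mul_of_nonneg_left (sum_sqrt_geometric_weight_le hβ hβ4 K n)
    (by positivity : 0 ≤ s * √(2 * c)))
  rw [mul_sum]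
  refine sum_le_sum fun k _ => ?_
  rw [mul_assoc, mul_assoc]
  refine mul_le_mul_of_nonneg_left ?_ hs.le
  rw [← Real.sqrt_mul (by positivity), ← Real.sqrt_mul (by positivity), ← mul_sum]
  refine Real.sqrt_le_sqrt ?_
  have : 0 ≤ β⁻¹ ^ k := by positivity
  nlinarith

end GeometricChaining

/-! ### Packing by balls of a seminorm -/

section SeminormBalls

open Module
open scoped Pointwise

variable {E : Type*} [NormedAddCommGroup E] [NormedSpace ℝ E]

lemma disjoint_seminorm_closedBall (ρ : Seminorm ℝ E) {x y : E} {r : ℝ} (h : 2 * r < ρ (x - y)) :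
    Disjoint (ρ.closedBall x r) (ρ.closedBall y r) := by
  refine Set.disjoint_left.mpr fun z hx hy => h.not_ge ?_
  rw [Seminorm.mem_closedBall] at hx hy
  calc ρ (x - y) = ρ ((z - y) - (z - x)) := by congr 1; abel
    _ ≤ ρ (z - y) + ρ (z - x) := map_sub_le_add ρ _ _
    _ ≤ 2 * r := by linarith

lemma seminorm_closedBall_subset_closedBall {ρ : Seminorm ℝ E} {C : ℝ} (hC : ∀ z, ‖z‖ ≤ C * ρ z)
    (x : E) (r : ℝ) : ρ.closedBall x r ⊆ Metric.closedBall x (|C| * r) := fun z hz => by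
  rw [Seminorm.mem_closedBall] at hz
  rw [mem_closedBall_iff_norm]
  calc ‖z - x‖ ≤ C * ρ (z - x) := hC _
    _ ≤ |C| * ρ (z - x) := mul_le_mul_of_nonneg_right (le_abs_self C) (apply_nonneg ρ _)
    _ ≤ |C| * r := by gcongr

variable [MeasurableSpace E] [BorelSpace E]

lemma measurableSet_seminorm_closedBall {ρ : Seminorm ℝ E} (hρ : Continuous ρ) (x : E) (r : ℝ) :
    MeasurableSet (ρ.closedBall x r) :=
  (isClosed_le (hρ.comp (continuous_sub_right x)) continuous_const).measurableSet

variable [FiniteDimensional ℝ E]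

lemma addHaar_real_seminorm_closedBall (ν : Measure E) [ν.IsAddHaarMeasure] (ρ : Seminorm ℝ E)
    (x : E) {r : ℝ} (hr : 0 < r) :
    ν.real (ρ.closedBall x r) = r ^ finrank ℝ E * ν.real (ρ.closedBall 0 1) := by
  have hball : ρ.closedBall x r = x +ᵥ r • (ρ.closedBall 0 1 : Set E) := by
    rw [Seminorm.smul_closedBall_zero (norm_pos_iff.mpr hr.ne'), Real.norm_of_nonneg hr.le, mul_one,
      Seminorm.vadd_closedBall, vadd_eq_add, add_zero]
  rw [hball, measureReal_def, measure_vadd, Measure.addHaar_smul, ENNReal.toReal_mul,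
    ENNReal.toReal_ofReal (abs_nonneg _), abs_of_pos (by positivity), measureReal_def]

lemma card_le_pow_finrank_of_pairwise_lt_seminorm {ρ : Seminorm ℝ E} (hρ : Continuous ρ)
    {C R τ : ℝ} (hC : ∀ z, ‖z‖ ≤ C * ρ z) (hτ : 0 < τ) (hR : 0 ≤ R) {S : Finset E} {g : E}
    (hS : ∀ a ∈ S, ρ (a - g) ≤ R) (hsep : (S : Set E).Pairwise fun a b => τ < ρ (a - b)) :
    (S.card : ℝ) ≤ (1 + 2 * R / τ) ^ finrank ℝ E := by
  let vol : Measure E := Measure.addHaar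
  have hfinite {x : E} {r : ℝ} : vol (ρ.closedBall x r) ≠ ⊤ :=
    ((isCompact_closedBall x (|C| * r)).measure_lt_top.trans_le' (measure_mono
      (seminorm_closedBall_subset_closedBall hC x r))).ne
  have hpos : 0 < vol.real (ρ.closedBall 0 1) := by
    have hopen : IsOpen (ρ.ball 0 1) := by
      rw [Seminorm.ball_zero_eq]
      exact isOpen_lt hρ continuous_const
    have hmeasure := (hopen.measure_pos vol ⟨0, by simp⟩).trans_le
      (measure_mono (ρ.ball_subset_closedBall 0 1))
    exact ENNReal.toReal_pos hmeasure.ne' hfinite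
  have hdisj : (S : Set E).PairwiseDisjoint fun a => ρ.closedBall a (τ / 2) :=
    fun a ha b hb hab => disjoint_seminorm_closedBall ρ
      ((mul_div_cancel₀ τ two_ne_zero).trans_lt (hsep ha hb hab))
  have hsubset : (⋃ a ∈ S, ρ.closedBall a (τ / 2)) ⊆ ρ.closedBall g (R + τ / 2) := by
    refine Set.iUnion₂_subset fun a ha y hy => ?_
    rw [Seminorm.mem_closedBall] at hy ⊢
    calc ρ (y - g) = ρ ((a - g) + (y - a)) := by congr 1; abel
      _ ≤ ρ (a - g) + ρ (y - a) := map_add_le_add ρ _ _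
      _ ≤ R + τ / 2 := add_le_add (hS a ha) hy
  have hvolume : S.card * ((τ / 2) ^ finrank ℝ E * vol.real (ρ.closedBall 0 1)) ≤
      (R + τ / 2) ^ finrank ℝ E * vol.real (ρ.closedBall 0 1) := by
    calc S.card * ((τ / 2) ^ finrank ℝ E * vol.real (ρ.closedBall 0 1))
        = ∑ a ∈ S, vol.real (ρ.closedBall a (τ / 2)) := by
          simp [addHaar_real_seminorm_closedBall vol ρ _ (half_pos hτ)]
      _ = vol.real (⋃ a ∈ S, ρ.closedBall a (τ / 2)) :=
          (measureReal_biUnion_finset hdisj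
            (fun a _ => measurableSet_seminorm_closedBall hρ a _) fun _ _ => hfinite).symm
      _ ≤ vol.real (ρ.closedBall g (R + τ / 2)) := measureReal_mono hsubset hfinite
      _ = _ := addHaar_real_seminorm_closedBall vol ρ g (by positivity)
  rw [← mul_assoc] at hvolume
  have hcancel := le_of_mul_le_mul_right hvolume hpos
  have hratio : 1 + 2 * R / τ = (R + τ / 2) / (τ / 2) := by
    field_simp
    ring
  rwa [hratio, div_pow, le_div_iff₀ (by positivity)]

end SeminormBalls

/-! ### Gaussian measure and dual Sudakov -/

section Gaussian

open Module ProbabilityTheory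
open scoped ENNReal

variable {E : Type*} [NormedAddCommGroup E] [InnerProductSpace ℝ E]

/-- The density of the standard Gaussian measure with respect to the Lebesgue measure. -/
noncomputable def stdGaussianDensity (y : E) : ℝ :=
  ((2 * Real.pi) ^ (finrank ℝ E / 2 : ℝ))⁻¹ * Real.exp (-(‖y‖ ^ 2 / 2))

lemma stdGaussianDensity_nonneg (y : E) : 0 ≤ stdGaussianDensity y := by
  unfold stdGaussianDensity
  positivity

lemma two_mul_exp_mul_stdGaussianDensity_le (y z : E) :
    2 * (Real.exp (-(‖z‖ ^ 2 / 2)) * stdGaussianDensity y) ≤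
      stdGaussianDensity (y + z) + stdGaussianDensity (-y + z) := by
  have hcosh : 2 ≤ Real.exp (-inner ℝ y z) + Real.exp (inner ℝ y z) := by
    linarith [Real.add_one_le_exp (inner ℝ y z), Real.add_one_le_exp (-inner ℝ y z)]
  have hexp (x : E) : Real.exp (-(‖x + z‖ ^ 2 / 2)) =
      Real.exp (-(‖z‖ ^ 2 / 2)) * Real.exp (-(‖x‖ ^ 2 / 2)) * Real.exp (-inner ℝ x z) := by
    rw [norm_add_sq_real, ← Real.exp_add, ← Real.exp_add]
    ring_nf
  simp only [stdGaussianDensity, hexp, norm_neg, inner_neg_left, neg_neg]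
  set a := Real.exp (-(‖z‖ ^ 2 / 2))
  set b := Real.exp (-(‖y‖ ^ 2 / 2))
  set c := ((2 * Real.pi) ^ (finrank ℝ E / 2 : ℝ))⁻¹
  calc 2 * (a * (c * b)) = c * a * b * 2 := by ring
    _ ≤ c * a * b * (Real.exp (-inner ℝ y z) + Real.exp (inner ℝ y z)) := by gcongr
    _ = _ := by ring

variable [MeasurableSpace E] [BorelSpace E]

@[fun_prop]
lemma measurable_stdGaussianDensity : Measurable (stdGaussianDensity : E → ℝ) := by
  unfold stdGaussianDensity
  fun_prop

variable [FiniteDimensional ℝ E]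

lemma integrable_stdGaussianDensity : Integrable (stdGaussianDensity : E → ℝ) := by
  have h := (GaussianFourier.integrable_cexp_neg_mul_sq_norm_add (V := E)
    (b := 1 / 2) (by norm_num) 0 0).norm
  refine (h.const_mul ((2 * Real.pi) ^ (finrank ℝ E / 2 : ℝ))⁻¹).congr (.of_forall fun y => ?_)
  simp only [stdGaussianDensity, Complex.norm_exp]
  congr 2
  simp [← Complex.ofReal_pow]
  ring

lemma stdGaussian_eq_withDensity :
    stdGaussian E = volume.withDensity fun y => ENNReal.ofReal (stdGaussianDensity y) := by
  have : IsFiniteMeasure (volume.withDensity fun y : E => ENNReal.ofReal (stdGaussianDensity y)) :=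
    isFiniteMeasure_withDensity_ofReal integrable_stdGaussianDensity.2
  refine Measure.ext_of_charFun (funext fun t => ?_)
  have hfourier := GaussianFourier.integral_cexp_neg_mul_sq_norm_add (V := E)
    (b := 1 / 2) (by norm_num) Complex.I t
  set c : ℝ := (2 * Real.pi) ^ (finrank ℝ E / 2 : ℝ)
  have hc : (Real.pi / (1 / 2) : ℂ) ^ (finrank ℝ E / 2 : ℂ) = c := by
    rw [Complex.ofReal_cpow (by positivity)]
    push_cast
    ring_nf
  have hc0 : (c : ℂ) ≠ 0 := Complex.ofReal_ne_zero.mpr (by positivity)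
  rw [charFun_stdGaussian, charFun_apply, integral_withDensity_eq_integral_toReal_smul
    (by fun_prop) (.of_forall fun _ => ENNReal.ofReal_lt_top)]
  calc Complex.exp (-‖t‖ ^ 2 / 2)
      = (c : ℂ)⁻¹ * ∫ v : E, Complex.exp (-(1 / 2) * ‖v‖ ^ 2 + Complex.I * inner ℝ t v) := by
        rw [hfourier, hc, inv_mul_cancel_left₀ hc0, Complex.I_sq]
        ring_nf
    _ = ∫ v : E, (c : ℂ)⁻¹ * Complex.exp (-(1 / 2) * ‖v‖ ^ 2 + Complex.I * inner ℝ t v) :=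
        (integral_const_mul _ _).symm
    _ = _ := by
        refine integral_congr_ae (.of_forall fun v => ?_)
        simp only [ENNReal.toReal_ofReal (stdGaussianDensity_nonneg v), Complex.real_smul]
        simp only [stdGaussianDensity, Complex.ofReal_mul, Complex.ofReal_inv, Complex.ofReal_exp]
        rw [mul_assoc, ← Complex.exp_add, real_inner_comm]
        push_cast
        congr 2
        ring

/-- Averaging over `y` and `-y` makes the Cameron–Martin factor a `cosh`, which is at least `1`. -/
lemma exp_mul_stdGaussian_le_preimage_sub {K : Set E} (hK : MeasurableSet K)
    (hsymm : ∀ y, -y ∈ K ↔ y ∈ K) (z : E) :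
    ENNReal.ofReal (Real.exp (-(‖z‖ ^ 2 / 2))) * stdGaussian E K ≤
      stdGaussian E ((· - z) ⁻¹' K) := by
  let p : E → ℝ≥0∞ := fun y => ENNReal.ofReal (stdGaussianDensity y)
  let I : E → ℝ≥0∞ := K.indicator 1
  have hp : Measurable p := by fun_prop
  have hI : Measurable I := measurable_one.indicator hK
  have hIneg (y : E) : I (-y) = I y := by
    by_cases hy : y ∈ K <;> simp [I, hy, hsymm]
  have happly {A : Set E} (hA : MeasurableSet A) :
      stdGaussian E A = ∫⁻ y, p y * A.indicator 1 y := by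
    rw [stdGaussian_eq_withDensity, withDensity_apply _ hA, ← lintegral_indicator hA]
    exact lintegral_congr fun y => by by_cases hy : y ∈ A <;> simp [hy, p]
  have hadd : stdGaussian E ((· - z) ⁻¹' K) = ∫⁻ y, p (y + z) * I y := by
    rw [happly (measurable_sub_const z hK), ← lintegral_add_right_eq_self _ z]
    refine lintegral_congr fun y => ?_
    by_cases hy : y ∈ K <;> simp [I, hy]
  have hneg : stdGaussian E ((· - z) ⁻¹' K) = ∫⁻ y, p (-y + z) * I y := by
    rw [hadd, ← lintegral_neg_eq_self]
    simp only [hIneg]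
  have hpointwise (y : E) : 2 * (ENNReal.ofReal (Real.exp (-(‖z‖ ^ 2 / 2))) * p y) ≤
      p (y + z) + p (-y + z) := by
    simp only [p]
    rw [← ENNReal.ofReal_add (stdGaussianDensity_nonneg _) (stdGaussianDensity_nonneg _),
      ← ENNReal.ofReal_ofNat, ← ENNReal.ofReal_mul (by positivity),
      ← ENNReal.ofReal_mul (by positivity)]
    exact ENNReal.ofReal_le_ofReal (two_mul_exp_mul_stdGaussianDensity_le y z)
  refine (ENNReal.mul_le_mul_iff_right two_ne_zero ENNReal.ofNat_ne_top).mp ?_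
  calc 2 * (ENNReal.ofReal (Real.exp (-(‖z‖ ^ 2 / 2))) * stdGaussian E K)
      = ∫⁻ y, 2 * (ENNReal.ofReal (Real.exp (-(‖z‖ ^ 2 / 2))) * p y) * I y := by
        simp only [mul_assoc]
        rw [lintegral_const_mul _ (by fun_prop), lintegral_const_mul _ (by fun_prop), happly hK]
    _ ≤ ∫⁻ y, (p (y + z) + p (-y + z)) * I y :=
        lintegral_mono fun y => mul_le_mul_left (hpointwise y) _
    _ = 2 * stdGaussian E ((· - z) ⁻¹' K) := by
        simp only [add_mul]
        rw [lintegral_add_left (by fun_prop), ← hadd, ← hneg, two_mul]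

/-- Dual Sudakov inequality: the dilated balls around the points of `S` are disjoint, and the
Gaussian measure of each is at least `exp (-2 κ² s / τ²) / 2`. -/
lemma card_le_two_mul_exp_of_pairwise_lt_seminorm {ρ : Seminorm ℝ E} (hρ : Continuous ρ)
    {κ s τ : ℝ} (hκ : 0 < κ) (hτ : 0 < τ) (hball : 1 / 2 ≤ (stdGaussian E).real (ρ.closedBall 0 κ))
    {S : Finset E} {g : E} (hS : ∀ a ∈ S, ‖a - g‖ ^ 2 ≤ s)
    (hsep : (S : Set E).Pairwise fun a b => τ < ρ (a - b)) :
    (S.card : ℝ) ≤ 2 * Real.exp (2 * κ ^ 2 * s / τ ^ 2) := by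
  set z : E → E := fun a => (2 * κ / τ) • (a - g)
  have hdisj : (S : Set E).PairwiseDisjoint fun a => ρ.closedBall (z a) κ := by
    intro a ha b hb hab
    refine disjoint_seminorm_closedBall ρ ?_
    rw [← smul_sub, sub_sub_sub_cancel_right, map_smul_eq_mul,
      Real.norm_of_nonneg (by positivity)]
    calc 2 * κ = 2 * κ / τ * τ := by field_simp
      _ < 2 * κ / τ * ρ (a - b) := by gcongr; exact hsep ha hb hab
  have hmeasure {a : E} (ha : a ∈ S) : Real.exp (-(2 * κ ^ 2 * s / τ ^ 2)) * (1 / 2) ≤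
      (stdGaussian E).real (ρ.closedBall (z a) κ) := by
    have hpre : (· - z a) ⁻¹' (ρ.closedBall 0 κ) = ρ.closedBall (z a) κ := by
      ext y
      simp [Seminorm.mem_closedBall]
    have h := ENNReal.toReal_mono (measure_ne_top _ _) (exp_mul_stdGaussian_le_preimage_sub
      (measurableSet_seminorm_closedBall hρ 0 κ) (fun y => by simp) (z a))
    rw [hpre, ENNReal.toReal_mul, ENNReal.toReal_ofReal (Real.exp_nonneg _)] at h
    refine le_trans (mul_le_mul (Real.exp_le_exp.mpr (neg_le_neg ?_)) hball (by norm_num)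
      (Real.exp_nonneg _)) h
    calc ‖z a‖ ^ 2 / 2 = 2 * κ ^ 2 * ‖a - g‖ ^ 2 / τ ^ 2 := by
          rw [norm_smul, Real.norm_of_nonneg (by positivity)]
          ring
      _ ≤ 2 * κ ^ 2 * s / τ ^ 2 := by gcongr; exact hS a ha
  have hsum : S.card * (Real.exp (-(2 * κ ^ 2 * s / τ ^ 2)) * (1 / 2)) ≤ 1 := by
    calc S.card * (Real.exp (-(2 * κ ^ 2 * s / τ ^ 2)) * (1 / 2))
        ≤ ∑ a ∈ S, (stdGaussian E).real (ρ.closedBall (z a) κ) := by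
          rw [← nsmul_eq_mul]
          exact Finset.card_nsmul_le_sum _ _ _ fun a ha => hmeasure ha
      _ ≤ (stdGaussian E).real Set.univ := sum_measureReal_le_measureReal_univ
          (fun a _ => measurableSet_seminorm_closedBall hρ _ _) hdisj
      _ = 1 := probReal_univ
  rw [Real.exp_neg, inv_mul_eq_div, ← mul_div_assoc, div_le_one (Real.exp_pos _)] at hsum
  linarith

lemma abs_pow_le_pow_mul_exp_add_exp_neg (x : ℝ) (r : ℕ) :
    |x| ^ r ≤ (r : ℝ) ^ r * (Real.exp x + Real.exp (-x)) := by
  have hfactorial : |x| ^ r / r.factorial ≤ Real.exp x + Real.exp (-x) :=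
    (Real.pow_div_factorial_le_exp _ (abs_nonneg x) r).trans (Real.exp_abs_le x)
  rw [div_le_iff₀ (by positivity), mul_comm] at hfactorial
  refine hfactorial.trans ?_
  gcongr
  exact_mod_cast r.factorial_le_pow

lemma integral_abs_pow_le_of_hasSubgaussianMGF {Ω : Type*} [MeasurableSpace Ω] {μ : Measure Ω}
    {X : Ω → ℝ} {c : NNReal} {s : ℝ} (hX : HasSubgaussianMGF X c μ) (hs : 0 < s)
    (hcs : c ≤ s ^ 2) (r : ℕ) : ∫ ω, |X ω| ^ r ∂μ ≤ 2 * (2 * √r * s) ^ r := by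
  have hl : (√r * s) ^ r * (√r / s) ^ r = (r : ℝ) ^ r := by
    rw [← mul_pow]
    field_simp
    rw [Real.sq_sqrt r.cast_nonneg]
  have hl0 : 0 < (√r / s) ^ r := by
    rcases r.eq_zero_or_pos with rfl | hr
    · simp
    · positivity
  have hpointwise (ω : Ω) : |X ω| ^ r ≤
      (√r * s) ^ r * (Real.exp (√r / s * X ω) + Real.exp (-(√r / s) * X ω)) := by
    refine le_of_mul_le_mul_left ?_ hl0
    calc (√r / s) ^ r * |X ω| ^ r = |√r / s * X ω| ^ r := by
          rw [abs_mul, mul_pow, abs_of_nonneg (div_nonneg (Real.sqrt_nonneg _) hs.le)]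
      _ ≤ r ^ r * (Real.exp (√r / s * X ω) + Real.exp (-(√r / s * X ω))) :=
          abs_pow_le_pow_mul_exp_add_exp_neg _ _
      _ = _ := by rw [← hl, neg_mul]; ring
  have hmgf (t : ℝ) (ht : t ^ 2 = (√r / s) ^ 2) : mgf X μ t ≤ 2 ^ r := by
    refine (hX.mgf_le t).trans ?_
    have hexp : Real.exp (1 / 2) ≤ 2 := by
      rw [← Real.le_log_iff_exp_le two_pos]
      linarith [Real.log_two_gt_d9]
    calc Real.exp (c * t ^ 2 / 2) ≤ Real.exp (r * (1 / 2)) := by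
          rw [ht, div_pow, Real.sq_sqrt r.cast_nonneg]
          gcongr
          rw [← mul_div_assoc, div_div, div_le_iff₀ (by positivity)]
          nlinarith [r.cast_nonneg (α := ℝ)]
      _ = Real.exp (1 / 2) ^ r := Real.exp_nat_mul _ _
      _ ≤ 2 ^ r := by gcongr
  have hint (t : ℝ) := hX.integrable_exp_mul t
  calc ∫ ω, |X ω| ^ r ∂μ
      ≤ ∫ ω, (√r * s) ^ r * (Real.exp (√r / s * X ω) + Real.exp (-(√r / s) * X ω)) ∂μ :=
        integral_mono_of_nonneg (.of_forall fun _ => by positivity)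
          (((hint _).add (hint _)).const_mul _) (.of_forall hpointwise)
    _ = (√r * s) ^ r * (mgf X μ (√r / s) + mgf X μ (-(√r / s))) := by
        rw [integral_const_mul, integral_add (hint _) (hint _)]
        rfl
    _ ≤ (√r * s) ^ r * (2 ^ r + 2 ^ r) := by gcongr <;> exact hmgf _ (by ring)
    _ = 2 * (2 * √r * s) ^ r := by ring

lemma hasSubgaussianMGF_inner_stdGaussian (w : E) :
    HasSubgaussianMGF (fun y => inner ℝ w y) (‖w‖₊ ^ 2) (stdGaussian E) := by
  have hmap := IsGaussian.map_eq_gaussianReal (μ := stdGaussian E) (innerSL ℝ w)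
  rw [integral_strongDual_stdGaussian, variance_dual_stdGaussian, innerSL_apply_norm] at hmap
  refine HasSubgaussianMGF.of_map (X := id) (innerSL ℝ w).continuous.aemeasurable ?_
  change HasSubgaussianMGF id _ ((stdGaussian E).map (innerSL ℝ w))
  rw [hmap]
  refine ⟨fun t => integrable_exp_mul_gaussianReal t, fun t => ?_⟩
  rw [mgf_gaussianReal Measure.map_id]
  simp

variable {Ω : Type*} [MeasurableSpace Ω] {ν : Measure Ω} [IsFiniteMeasure ν] {u : Ω → E} {H : ℝ}
  {r : ℕ} {ρ : Seminorm ℝ E}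

lemma integrable_uncurry_abs_inner_pow_stdGaussian (hu : Measurable u)
    (huH : ∀ ω, ‖u ω‖ ≤ H) (r : ℕ) :
    Integrable (Function.uncurry fun y ω => |inner ℝ (u ω) y| ^ r) ((stdGaussian E).prod ν) := by
  have hdom : Integrable (fun y : E => (H * ‖y‖) ^ r) (stdGaussian E) := by
    simp only [mul_pow]
    exact (IsGaussian.memLp_id _ r (ENNReal.natCast_ne_top r)).integrable_norm_pow'.const_mul _
  refine (hdom.comp_fst ν).mono' (Measurable.aestronglyMeasurable (by fun_prop))
    (.of_forall fun p => ?_)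
  simp only [Function.uncurry, norm_pow, Real.norm_eq_abs, abs_abs]
  gcongr
  exact (abs_real_inner_le_norm _ _).trans (by gcongr; exact huH _)

lemma integral_seminorm_pow_stdGaussian_le (hu : Measurable u) (hH : 0 < H)
    (huH : ∀ ω, ‖u ω‖ ≤ H) (hρ : ∀ z, ρ z ^ r = ∫ ω, |inner ℝ (u ω) z| ^ r ∂ν) :
    ∫ y, ρ y ^ r ∂stdGaussian E ≤ ν.real Set.univ * (2 * (2 * √r * H) ^ r) := by
  have hmoment (ω : Ω) : ∫ y, |inner ℝ (u ω) y| ^ r ∂stdGaussian E ≤ 2 * (2 * √r * H) ^ r := by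
    refine integral_abs_pow_le_of_hasSubgaussianMGF (hasSubgaussianMGF_inner_stdGaussian _) hH ?_ r
    simpa using pow_le_pow_left₀ (norm_nonneg _) (huH ω) 2
  calc ∫ y, ρ y ^ r ∂stdGaussian E
      = ∫ ω, ∫ y, |inner ℝ (u ω) y| ^ r ∂stdGaussian E ∂ν := by
        simp only [hρ]
        exact integral_integral_swap (integrable_uncurry_abs_inner_pow_stdGaussian hu huH r)
    _ ≤ ∫ _, 2 * (2 * √r * H) ^ r ∂ν :=
        integral_mono_of_nonneg (.of_forall fun _ => integral_nonneg fun _ => by positivity)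
          (integrable_const _) (.of_forall hmoment)
    _ = ν.real Set.univ * (2 * (2 * √r * H) ^ r) := by simp

lemma half_le_stdGaussian_seminorm_closedBall (hν : ν.real Set.univ ≤ 2) (hu : Measurable u)
    (hH : 0 < H) (huH : ∀ ω, ‖u ω‖ ≤ H) (hr : r ≠ 0) (hρc : Continuous ρ)
    (hρ : ∀ z, ρ z ^ r = ∫ ω, |inner ℝ (u ω) z| ^ r ∂ν) :
    1 / 2 ≤ (stdGaussian E).real (ρ.closedBall 0 (16 * √r * H)) := by
  set κ := 16 * √r * H
  have hκ : 8 * (2 * √r * H) ^ r ≤ κ ^ r := by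
    have h8 : (8 : ℝ) ≤ 8 ^ r := le_self_pow₀ (by norm_num) hr
    calc 8 * (2 * √r * H) ^ r ≤ 8 ^ r * (2 * √r * H) ^ r := by gcongr
      _ = κ ^ r := by rw [← mul_pow]; congr 1; ring
  have hpos : 0 < (2 * √r * H) ^ r := by
    have : 0 < r := hr.bot_lt
    positivity
  have hint : Integrable (fun y => ρ y ^ r) (stdGaussian E) := by
    simp only [hρ]
    exact (integrable_uncurry_abs_inner_pow_stdGaussian hu huH r).integral_prod_left
  have hmarkov := mul_meas_ge_le_integral_of_nonneg (.of_forall fun y => by positivity) hint (κ ^ r)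
  have hcompl : (stdGaussian E).real (ρ.closedBall 0 κ)ᶜ ≤
      (stdGaussian E).real {y | κ ^ r ≤ ρ y ^ r} := by
    refine measureReal_mono fun y hy => ?_
    rw [Set.mem_compl_iff, Seminorm.mem_closedBall_zero, not_le] at hy
    exact pow_le_pow_left₀ (by positivity) hy.le r
  rw [probReal_compl_eq_one_sub (measurableSet_seminorm_closedBall hρc _ _)] at hcompl
  have hmoment := integral_seminorm_pow_stdGaussian_le hu hH huH hρ
  nlinarith

end Gaussian

/-! ### Empirical measures and `L_r` seminorms -/

section EmpiricalMeasure

variable {Ω κ : Type*} [MeasurableSpace Ω] [Fintype κ]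

/-- The uniform probability measure on a finite family of points, counted with multiplicity. For
an empty family it is `0`. -/
noncomputable def empiricalMeasure (x : κ → Ω) : Measure Ω :=
  (Fintype.card κ : ENNReal)⁻¹ • ∑ j, Measure.dirac (x j)

instance [Nonempty κ] (x : κ → Ω) : IsProbabilityMeasure (empiricalMeasure x) where
  measure_univ := by
    simp only [empiricalMeasure, Measure.smul_apply, Measure.coe_finsetSum, Finset.sum_apply,
      measure_univ, Finset.sum_const, Finset.card_univ, nsmul_eq_mul, mul_one, smul_eq_mul]
    exact ENNReal.inv_mul_cancel (by simp) (by simp)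

lemma integral_empiricalMeasure (x : κ → Ω) {f : Ω → ℝ} (hf : Measurable f) :
    ∫ ω, f ω ∂empiricalMeasure x = (∑ j, f (x j)) / Fintype.card κ := by
  rw [empiricalMeasure, integral_smul_measure, integral_finsetSum_measure fun j _ =>
    integrable_dirac' hf.stronglyMeasurable (by simp)]
  simp [integral_dirac' _ _ hf.stronglyMeasurable, div_eq_inv_mul]

end EmpiricalMeasure

section LrSeminorm

variable {E Ω : Type*} [NormedAddCommGroup E] [InnerProductSpace ℝ E] [FiniteDimensional ℝ E]
  [TopologicalSpace Ω] [CompactSpace Ω] [MeasurableSpace Ω] [BorelSpace Ω]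

lemma exists_seminorm_pow_eq_integral (ν : Measure Ω) [IsFiniteMeasure ν] {u : Ω → E}
    (hu : Continuous u) {r : ℕ} (hr : 1 ≤ r) :
    ∃ ρ : Seminorm ℝ E, Continuous ρ ∧ ∀ z, ρ z ^ r = ∫ ω, |inner ℝ (u ω) z| ^ r ∂ν := by
  have : Fact (1 ≤ (r : ENNReal)) := ⟨by exact_mod_cast hr⟩
  let A : E →ₗ[ℝ] C(Ω, ℝ) :=
    { toFun := fun z => ⟨fun ω => inner ℝ (u ω) z, by fun_prop⟩
      map_add' := fun z w => by ext ω; simp [inner_add_right]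
      map_smul' := fun c z => by ext ω; simp [inner_smul_right] }
  let T : E →ₗ[ℝ] Lp ℝ r ν := (ContinuousMap.toLp (E := ℝ) r ν ℝ).toLinearMap ∘ₗ A
  refine ⟨(normSeminorm ℝ (Lp ℝ r ν)).comp T,
    continuous_norm.comp T.continuous_of_finiteDimensional, fun z => ?_⟩
  have hT : (T z : Ω → ℝ) =ᵐ[ν] fun ω => inner ℝ (u ω) z := ContinuousMap.coeFn_toLp ν (A z)
  change ‖T z‖ ^ r = _
  rw [Lp.norm_def, (Lp.memLp (T z)).eLpNorm_eq_integral_rpow_norm (by positivity) (by simp),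
    ENNReal.toReal_ofReal (by positivity), ENNReal.toReal_natCast,
    Real.rpow_inv_natCast_pow (integral_nonneg fun _ => by positivity) (by omega)]
  refine integral_congr_ae ?_
  filter_upwards [hT] with ω hω
  rw [hω, Real.rpow_natCast, Real.norm_eq_abs]

end LrSeminorm

/-! ### Growth of Φ-functions -/

namespace IsPhiPrefun

variable {Φ : ℝ → ℝ} {q θ A s t : ℝ}

lemma div_rpow_mul_le (hΦ : IsPhiPrefun Φ) (hq : 0 < q) (hdec : DecQ Φ q) (hs : 0 ≤ s)
    (hst : s ≤ t) (ht : 0 < t) : (s / t) ^ q * Φ t ≤ Φ s := by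
  rcases hs.eq_or_lt with rfl | hs
  · simp [hΦ.map_zero, Real.zero_rpow hq.ne']
  rcases hst.eq_or_lt with rfl | hst
  · simp [div_self hs.ne']
  have h := hdec s t hs hst
  rw [div_le_div_iff₀ (by positivity) (by positivity)] at h
  rw [Real.div_rpow hs.le ht.le, div_mul_eq_mul_div, div_le_iff₀ (by positivity)]
  linarith

lemma map_mul_le (hΦ : IsPhiPrefun Φ) (hq : 0 < q) (hdec : DecQ Φ q) {c : ℝ} (ht : 0 ≤ t)
    (hc : 1 ≤ c) : Φ (c * t) ≤ c ^ q * Φ t := by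
  rcases ht.eq_or_lt with rfl | ht
  · simp [hΦ.map_zero]
  have h := hΦ.div_rpow_mul_le hq hdec ht.le (le_mul_of_one_le_left ht.le hc) (by positivity)
  rwa [div_mul_cancel_right₀ ht.ne', Real.inv_rpow (by positivity),
    inv_mul_le_iff₀ (by positivity)] at h

lemma pos (hΦ : IsPhiPrefun Φ) (hq : 0 < q) (hdec : DecQ Φ q) (ht : 0 < t) : 0 < Φ t := by
  obtain ⟨T, hT, htT⟩ := ((hΦ.tendsto_atTop.eventually_gt_atTop 0).and
    (Filter.eventually_gt_atTop t)).exists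
  have := ht.trans htT
  exact lt_of_lt_of_le (by positivity) (hΦ.div_rpow_mul_le hq hdec ht.le htT.le this)

lemma le_mul_div_rpow_mul (hΦ : IsPhiPrefun Φ) (hA : 1 ≤ A) (hinc : AIncP Φ θ A)
    (hs : 0 ≤ s) (hst : s ≤ t) (ht : 0 < t) : Φ s ≤ A * (s / t) ^ θ * Φ t := by
  have hΦt := hΦ.nonneg t ht.le
  rcases hs.eq_or_lt with rfl | hs
  · rw [hΦ.map_zero]; positivity
  rcases hst.eq_or_lt with rfl | hst
  · simpa [div_self hs.ne'] using le_mul_of_one_le_left hΦt hA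
  have h := hinc s t hs hst
  rw [div_le_iff₀ (by positivity)] at h
  rw [Real.div_rpow hs.le ht.le]
  exact h.trans_eq (by ring)

lemma sub_le_mul (hΦ : IsPhiPrefun Φ) (hq : 1 ≤ q) (hdec : DecQ Φ q) (hs : 0 ≤ s) (hst : s ≤ t)
    (ht : 0 < t) : Φ t - Φ s ≤ q * ((t - s) / t) * Φ t := by
  have bernoulli : 1 + q * (s / t - 1) ≤ (s / t) ^ q := by
    simpa using one_add_mul_self_le_rpow_one_add (s := s / t - 1)
      (by linarith [div_nonneg hs ht.le]) hq
  have h := (mul_le_mul_of_nonneg_right bernoulli (hΦ.nonneg t ht.le)).trans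
    (hΦ.div_rpow_mul_le (by linarith) hdec hs hst ht)
  rw [sub_div, div_self ht.ne']
  linarith

lemma map_le_max_rpow_mul (hΦ : IsPhiPrefun Φ) (hq : 0 < q) (hdec : DecQ Φ q) (hs : 0 ≤ s)
    (ht : 0 < t) : Φ s ≤ max 1 (s / t) ^ q * Φ t := by
  have hst : s ≤ max 1 (s / t) * t := (div_le_iff₀ ht).mp (le_max_right _ _)
  exact (hΦ.mono hs (hs.trans hst) hst).trans (hΦ.map_mul_le hq hdec ht.le (le_max_left 1 (s / t)))

lemma min_rpow_mul_le_map (hΦ : IsPhiPrefun Φ) (hq : 0 < q) (hdec : DecQ Φ q) (hs : 0 ≤ s)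
    (ht : 0 < t) : min 1 (s / t) ^ q * Φ t ≤ Φ s := by
  rcases le_total s t with h | h
  · rw [min_eq_right ((div_le_one ht).mpr h)]
    exact hΦ.div_rpow_mul_le hq hdec hs h ht
  · rw [min_eq_left ((one_le_div ht).mpr h), Real.one_rpow, one_mul]
    exact hΦ.mono ht.le hs h

lemma continuous_comp_abs (hΦ : IsPhiPrefun Φ) (hq : 0 < q) (hdec : DecQ Φ q) :
    Continuous fun x => Φ |x| := by
  refine continuous_iff_continuousAt.mpr fun t => ?_
  rcases eq_or_ne t 0 with rfl | ht
  · rw [continuousAt_iff_punctured_nhds, abs_zero, hΦ.map_zero]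
    exact hΦ.tendsto_zero.comp tendsto_abs_nhdsNE_zero
  have ht : 0 < |t| := abs_pos.mpr ht
  have hratio : Continuous fun x : ℝ => |x| / |t| := by fun_prop
  refine tendsto_of_tendsto_of_tendsto_of_le_of_le
    (((continuous_const.min hratio).rpow_const fun _ => .inr hq.le).mul_const (Φ |t|)
      |>.tendsto' t (Φ |t|) (by simp [div_self ht.ne']))
    (((continuous_const.max hratio).rpow_const fun _ => .inr hq.le).mul_const (Φ |t|)
      |>.tendsto' t (Φ |t|) (by simp [div_self ht.ne']))
    (fun x => hΦ.min_rpow_mul_le_map hq hdec (abs_nonneg x) ht)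
    (fun x => hΦ.map_le_max_rpow_mul hq hdec (abs_nonneg x) ht)

end IsPhiPrefun

/-- The growth conditions under which the sampling theorem is proved: `Φ ∈ (aInc)_θ` with constant
`A` for some `θ ∈ (1, 2]`, and `Φ ∈ (Dec)_q`. In the application `θ = min p 2`. -/
structure HasGrowth (Φ : ℝ → ℝ) (θ A q : ℝ) : Prop extends IsPhiPrefun Φ where
  one_lt_θ : 1 < θ
  θ_le_two : θ ≤ 2
  one_le_A : 1 ≤ A
  aInc : AIncP Φ θ A
  one_le_q : 1 ≤ q
  dec : DecQ Φ q

section Moments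

variable {Ω : Type*} [TopologicalSpace Ω] [CompactSpace Ω] [MeasurableSpace Ω] [BorelSpace Ω]
  {μ : Measure Ω}

lemma integrable_of_continuous [IsFiniteMeasure μ] {f : Ω → ℝ} (hf : Continuous f) :
    Integrable f μ :=
  hf.integrable_of_hasCompactSupport (.of_compactSpace f)

lemma sq_le_rpow_mul_rpow {h S θ : ℝ} (hθ : θ ≤ 2) (hh : 0 ≤ h) (hhS : h ≤ S) :
    h ^ 2 ≤ S ^ (2 - θ) * h ^ θ := by
  calc h ^ 2 = h ^ (2 - θ) * h ^ θ := by
        rw [← Real.rpow_add' hh (by norm_num), sub_add_cancel, Real.rpow_two]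
    _ ≤ S ^ (2 - θ) * h ^ θ := by gcongr

/-- Nikol'skii's inequality between `L_θ` and `C`. -/
lemma abs_rpow_le_of_integral_abs_rpow_le [IsFiniteMeasure μ] {f : Ω → ℝ} {θ H K : ℝ}
    (hf : Continuous f) (hθ : 0 < θ) (hθ2 : θ ≤ 2) (hK : 0 ≤ K)
    (hsup : ∀ ω, |f ω| ≤ H * √(∫ y, f y ^ 2 ∂μ)) (hint : ∫ ω, |f ω| ^ θ ∂μ ≤ K) (ω : Ω) :
    |f ω| ^ θ ≤ H ^ 2 * K := by
  obtain ⟨ω₀, -, hmax⟩ := isCompact_univ.exists_isMaxOn ⟨ω, Set.mem_univ ω⟩ hf.abs.continuousOn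
  have hmax : ∀ y, |f y| ≤ |f ω₀| := fun y => hmax (Set.mem_univ y)
  set S := |f ω₀|
  refine (Real.rpow_le_rpow (abs_nonneg _) (hmax ω) hθ.le).trans ?_
  rcases (abs_nonneg (f ω₀)).eq_or_lt with hS | hS
  · rw [show S = 0 from hS.symm, Real.zero_rpow hθ.ne']
    positivity
  have hL2 : ∫ y, f y ^ 2 ∂μ ≤ S ^ (2 - θ) * K := by
    calc ∫ y, f y ^ 2 ∂μ ≤ ∫ y, S ^ (2 - θ) * |f y| ^ θ ∂μ :=
          integral_mono (integrable_of_continuous (by fun_prop))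
            (integrable_of_continuous (continuous_const.mul
              (hf.abs.rpow_const fun _ => .inr hθ.le)))
            fun y => by simpa using sq_le_rpow_mul_rpow hθ2 (abs_nonneg (f y)) (hmax y)
      _ ≤ S ^ (2 - θ) * K := by rw [integral_const_mul]; gcongr
  refine le_of_mul_le_mul_left ?_ (Real.rpow_pos_of_pos hS (2 - θ))
  calc S ^ (2 - θ) * S ^ θ = S ^ 2 := by
        rw [← Real.rpow_add hS, sub_add_cancel, Real.rpow_two]
    _ ≤ (H * √(∫ y, f y ^ 2 ∂μ)) ^ 2 := by gcongr; exact hsup ω₀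
    _ = H ^ 2 * ∫ y, f y ^ 2 ∂μ := by
        rw [mul_pow, Real.sq_sqrt (integral_nonneg fun y => sq_nonneg _)]
    _ ≤ H ^ 2 * (S ^ (2 - θ) * K) := by gcongr
    _ = S ^ (2 - θ) * (H ^ 2 * K) := by ring

end Moments

/-- The bound on `∫ |f| ^ θ` for the functions with `∫ Φ |f| ≤ 1`. -/
noncomputable def momentBound (Φ : ℝ → ℝ) (A : ℝ) : ℝ := 1 + A / Φ 1

/-- The uniform bound on the functions with `∫ Φ |f| ≤ 1` and `‖f‖_∞ ≤ H ‖f‖_2`. -/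
noncomputable def supBound (Φ : ℝ → ℝ) (θ A H : ℝ) : ℝ := momentBound Φ A * H ^ (2 / θ)

namespace HasGrowth

variable {Φ : ℝ → ℝ} {θ A q s t M : ℝ}

lemma q_pos (hΦ : HasGrowth Φ θ A q) : 0 < q := zero_lt_one.trans_le hΦ.one_le_q

lemma θ_pos (hΦ : HasGrowth Φ θ A q) : 0 < θ := zero_lt_one.trans hΦ.one_lt_θ

lemma A_pos (hΦ : HasGrowth Φ θ A q) : 0 < A := zero_lt_one.trans_le hΦ.one_le_A

lemma pos (hΦ : HasGrowth Φ θ A q) (ht : 0 < t) : 0 < Φ t :=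
  hΦ.toIsPhiPrefun.pos hΦ.q_pos hΦ.dec ht

lemma continuous_comp_abs (hΦ : HasGrowth Φ θ A q) : Continuous fun x => Φ |x| :=
  hΦ.toIsPhiPrefun.continuous_comp_abs hΦ.q_pos hΦ.dec

lemma sq_sub_le_of_le (hΦ : HasGrowth Φ θ A q) (hM : 0 < M) (hs : 0 ≤ s) (hst : s ≤ t)
    (htM : t ≤ M) :
    (Φ t - Φ s) ^ 2 ≤ q ^ 2 * A * Φ M / M ^ θ * (t - s) ^ θ * (Φ t + Φ s) := by
  rcases (hs.trans hst).eq_or_lt with rfl | ht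
  · rw [le_antisymm hst hs]
    simp [hΦ.map_zero]
  have hΦs := hΦ.nonneg s hs
  have hΦt := hΦ.nonneg t ht.le
  have hinc := hΦ.le_mul_div_rpow_mul hΦ.one_le_A hΦ.aInc ht.le htM hM
  have hlip := hΦ.sub_le_mul hΦ.one_le_q hΦ.dec hs hst ht
  have hsub : 0 ≤ Φ t - Φ s := sub_nonneg.mpr (hΦ.mono hs ht.le hst)
  set y := (t - s) / t with hy
  have hy0 : 0 ≤ y := div_nonneg (by linarith) ht.le
  have hy1 : y ≤ 1 := by rw [hy, div_le_one ht]; linarith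
  have hq := hΦ.one_le_q
  calc (Φ t - Φ s) ^ 2 ≤ (q * y * Φ t) ^ 2 := by gcongr
    _ = q ^ 2 * y ^ 2 * Φ t * Φ t := by ring
    _ ≤ q ^ 2 * y ^ θ * (A * (t / M) ^ θ * Φ M) * (Φ t + Φ s) := by
        have : 0 ≤ A * (t / M) ^ θ * Φ M := hΦt.trans hinc
        gcongr
        · simpa using sq_le_rpow_mul_rpow hΦ.θ_le_two hy0 hy1
        · exact le_add_of_nonneg_right hΦs
    _ = q ^ 2 * A * Φ M / M ^ θ * (t - s) ^ θ * (Φ t + Φ s) := by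
        rw [hy, Real.div_rpow (by linarith) ht.le, Real.div_rpow ht.le hM.le]
        field_simp

lemma sq_sub_le (hΦ : HasGrowth Φ θ A q) (hM : 0 < M) (hs : 0 ≤ s) (ht : 0 ≤ t) (hsM : s ≤ M)
    (htM : t ≤ M) :
    (Φ s - Φ t) ^ 2 ≤ q ^ 2 * A * Φ M / M ^ θ * |s - t| ^ θ * (Φ s + Φ t) := by
  rcases le_total t s with h | h
  · rw [abs_of_nonneg (sub_nonneg.mpr h)]
    exact hΦ.sq_sub_le_of_le hM ht h hsM
  · rw [abs_sub_comm, sub_sq_comm, add_comm, abs_of_nonneg (sub_nonneg.mpr h)]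
    exact hΦ.sq_sub_le_of_le hM hs h htM

lemma rpow_le_one_add (hΦ : HasGrowth Φ θ A q) (ht : 0 ≤ t) : t ^ θ ≤ 1 + A / Φ 1 * Φ t := by
  have hΦ1 := hΦ.pos one_pos
  have hΦt := hΦ.nonneg t ht
  have hA := hΦ.A_pos
  rcases le_total t 1 with h | h
  · exact (Real.rpow_le_one ht h hΦ.θ_pos.le).trans (le_add_of_nonneg_right (by positivity))
  have hinc := hΦ.le_mul_div_rpow_mul hΦ.one_le_A hΦ.aInc zero_le_one h (by linarith)
  rw [one_div, Real.inv_rpow ht] at hinc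
  have : t ^ θ ≤ A / Φ 1 * Φ t := by
    rw [div_mul_eq_mul_div, le_div_iff₀ hΦ1]
    calc t ^ θ * Φ 1 ≤ t ^ θ * (A * (t ^ θ)⁻¹ * Φ t) := by gcongr
      _ = A * Φ t := by field_simp
  linarith

lemma one_le_momentBound (hΦ : HasGrowth Φ θ A q) : 1 ≤ momentBound Φ A :=
  le_add_of_nonneg_right (div_nonneg hΦ.A_pos.le (hΦ.pos one_pos).le)

lemma one_le_supBound (hΦ : HasGrowth Φ θ A q) {H : ℝ} (hH : 1 ≤ H) : 1 ≤ supBound Φ θ A H :=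
  one_le_mul_of_one_le_of_one_le hΦ.one_le_momentBound
    (Real.one_le_rpow hH (div_pos two_pos hΦ.θ_pos).le)

variable {Ω : Type*} [TopologicalSpace Ω] [CompactSpace Ω] [MeasurableSpace Ω] [BorelSpace Ω]
  {μ : Measure Ω} {f : Ω → ℝ}

lemma integral_rpow_le (hΦ : HasGrowth Φ θ A q) [IsProbabilityMeasure μ] (hf : Continuous f)
    (hint : ∫ ω, Φ |f ω| ∂μ ≤ 1) : ∫ ω, |f ω| ^ θ ∂μ ≤ momentBound Φ A := by
  have hΦ1 := hΦ.pos one_pos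
  have hΦf : Integrable (fun ω => Φ |f ω|) μ :=
    integrable_of_continuous (hΦ.continuous_comp_abs.comp hf)
  have hA := hΦ.A_pos
  calc ∫ ω, |f ω| ^ θ ∂μ ≤ ∫ ω, (1 + A / Φ 1 * Φ |f ω|) ∂μ :=
        integral_mono (integrable_of_continuous (hf.abs.rpow_const fun _ => .inr hΦ.θ_pos.le))
          ((integrable_const _).add (hΦf.const_mul _))
          fun ω => hΦ.rpow_le_one_add (abs_nonneg _)
    _ = 1 + A / Φ 1 * ∫ ω, Φ |f ω| ∂μ := by
        rw [integral_add (integrable_const _) (hΦf.const_mul _), integral_const_mul]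
        simp
    _ ≤ momentBound Φ A := by
        unfold momentBound
        gcongr
        exact mul_le_of_le_one_right (by positivity) hint

lemma abs_le_of_integral_le_one (hΦ : HasGrowth Φ θ A q) [IsProbabilityMeasure μ]
    (hf : Continuous f) {H : ℝ} (hH : 0 ≤ H) (hsup : ∀ ω, |f ω| ≤ H * √(∫ y, f y ^ 2 ∂μ))
    (hint : ∫ ω, Φ |f ω| ∂μ ≤ 1) (ω : Ω) : |f ω| ≤ supBound Φ θ A H := by
  have hK := hΦ.one_le_momentBound
  have hθ := hΦ.θ_pos
  rw [supBound, ← Real.rpow_le_rpow_iff (abs_nonneg _) (by positivity) hθ,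
    Real.mul_rpow (by positivity) (by positivity), ← Real.rpow_mul hH,
    div_mul_cancel₀ _ hθ.ne', Real.rpow_two]
  calc |f ω| ^ θ ≤ H ^ 2 * momentBound Φ A :=
        abs_rpow_le_of_integral_abs_rpow_le hf hθ hΦ.θ_le_two (by linarith) hsup
          (hΦ.integral_rpow_le hf hint) ω
    _ ≤ momentBound Φ A ^ θ * H ^ 2 := by
        rw [mul_comm]
        gcongr
        exact Real.self_le_rpow_of_one_le hK hΦ.one_lt_θ.le

end HasGrowth

/-! ### Symmetrization -/

section Symmetrization

open scoped BigOperators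

variable {Ω κ : Type*} [MeasurableSpace Ω] [Fintype κ] {μ : Measure Ω} [IsProbabilityMeasure μ]

lemma integral_pi_eval {g : Ω → ℝ} (hg : AEStronglyMeasurable g μ) (j : κ) :
    ∫ y, g (y j) ∂(Measure.pi fun _ : κ => μ) = ∫ ω, g ω ∂μ := by
  have hmp := measurePreserving_eval (fun _ : κ => μ) j
  rw [← hmp.map_eq] at hg
  conv_rhs => rw [← hmp.map_eq]
  exact (integral_map hmp.measurable.aemeasurable hg).symm

/-- Exchanging `p.1 j` and `p.2 j` whenever `e j ≠ 1`. -/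
def swapCoords (e : κ → ℤˣ) (p : (κ → Ω) × (κ → Ω)) : (κ → Ω) × (κ → Ω) :=
  (fun j => if e j = 1 then p.1 j else p.2 j, fun j => if e j = 1 then p.2 j else p.1 j)

lemma measurePreserving_swapCoords (e : κ → ℤˣ) :
    MeasurePreserving (swapCoords e)
      ((Measure.pi fun _ : κ => μ).prod (Measure.pi fun _ : κ => μ))
      ((Measure.pi fun _ : κ => μ).prod (Measure.pi fun _ : κ => μ)) := by
  have hpair := measurePreserving_arrowProdEquivProdArrow Ω Ω κ (fun _ => μ) (fun _ => μ)
  have hswap : MeasurePreserving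
      (fun (w : κ → Ω × Ω) j => (if e j = 1 then id else Prod.swap) (w j))
      (Measure.pi fun _ => μ.prod μ) (Measure.pi fun _ => μ.prod μ) := by
    refine measurePreserving_pi _ _ fun j => ?_
    split_ifs
    · exact MeasurePreserving.id _
    · exact Measure.measurePreserving_swap
  convert hpair.comp (hswap.comp hpair.symm) using 1
  ext p j <;> by_cases h : e j = 1 <;>
    simp [swapCoords, h, MeasurableEquiv.arrowProdEquivProdArrow, Equiv.arrowProdEquivProdArrow]

/-- The deviation of the sum of `φ` over a sample `x` from its expectation, when the points of the
sample are distributed according to `μ`. -/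
noncomputable def sampleDeviation (μ : Measure Ω) (φ : Ω → ℝ) (x : κ → Ω) : ℝ :=
  |∑ j, φ (x j) - Fintype.card κ * ∫ ω, φ ω ∂μ|

lemma continuous_sampleDeviation [TopologicalSpace Ω] {μ : Measure Ω} {φ : Ω → ℝ}
    (hφ : Continuous φ) : Continuous (sampleDeviation (κ := κ) μ φ) := by
  unfold sampleDeviation
  fun_prop

variable [TopologicalSpace Ω] [CompactSpace Ω] [BorelSpace Ω] [SecondCountableTopology Ω]
  {ι : Type*} {F : Finset ι} {φ : ι → Ω → ℝ}

lemma integral_sup'_sampleDeviation_le_ghost (hF : F.Nonempty) (hφ : ∀ f, Continuous (φ f)) :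
    ∫ x, F.sup' hF (fun f => sampleDeviation μ (φ f) x) ∂(Measure.pi fun _ : κ => μ) ≤
      ∫ p, F.sup' hF (fun f => |∑ j, (φ f (p.1 j) - φ f (p.2 j))|)
        ∂(Measure.pi fun _ : κ => μ).prod (Measure.pi fun _ : κ => μ) := by
  have hS : Continuous fun p : (κ → Ω) × (κ → Ω) =>
      F.sup' hF fun f => |∑ j, (φ f (p.1 j) - φ f (p.2 j))| :=
    .finset_sup'_apply hF fun f _ => by fun_prop
  rw [integral_prod _ (integrable_of_continuous hS)]
  refine integral_mono
    (integrable_of_continuous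
      (.finset_sup'_apply hF fun f _ => continuous_sampleDeviation (hφ f)))
    (integrable_of_continuous hS).integral_prod_left fun x => ?_
  refine Finset.sup'_le hF _ fun f hf => ?_
  have hmean : ∫ y : κ → Ω, ∑ j, (φ f (x j) - φ f (y j)) ∂(Measure.pi fun _ => μ)
      = ∑ j, φ f (x j) - Fintype.card κ * ∫ ω, φ f ω ∂μ := by
    simp only [Finset.sum_sub_distrib]
    rw [integral_sub (integrable_const _) (integrable_of_continuous (by fun_prop)),
      integral_const, integral_finsetSum _ fun j _ => integrable_of_continuous (by fun_prop)]
    simp [integral_pi_eval (hφ f).aestronglyMeasurable]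
  rw [sampleDeviation, ← hmean]
  refine abs_integral_le_integral_abs.trans (integral_mono
    (integrable_of_continuous (by fun_prop)) (integrable_of_continuous
      (hS.comp (Continuous.prodMk_right x))) fun y => ?_)
  exact F.le_sup' (fun f => |∑ j, (φ f (x j) - φ f (y j))|) hf

lemma integrable_sup'_abs_rademacherSum (hF : F.Nonempty) (hφ : ∀ f, Continuous (φ f))
    (e : κ → ℤˣ) :
    Integrable (fun x => F.sup' hF fun f => |rademacherSum e fun j => φ f (x j)|)
      (Measure.pi fun _ : κ => μ) :=
  integrable_of_continuous (.finset_sup'_apply hF fun f _ =>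
    ((rademacherSum e).continuous_of_finiteDimensional.comp
      (by fun_prop : Continuous fun (x : κ → Ω) j => φ f (x j))).abs)

lemma integral_sup'_abs_sum_sub_swap_le (hF : F.Nonempty) (hφ : ∀ f, Continuous (φ f))
    (e : κ → ℤˣ) :
    ∫ p, F.sup' hF (fun f => |∑ j, (φ f (p.1 j) - φ f (p.2 j))|)
        ∂(Measure.pi fun _ : κ => μ).prod (Measure.pi fun _ : κ => μ) ≤
      2 * ∫ x, F.sup' hF (fun f => |rademacherSum e fun j => φ f (x j)|)
        ∂(Measure.pi fun _ : κ => μ) := by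
  set P := Measure.pi fun _ : κ => μ
  set T : (κ → Ω) → ℝ := fun x => F.sup' hF fun f => |rademacherSum e fun j => φ f (x j)|
  have hT : Integrable T P := integrable_sup'_abs_rademacherSum hF hφ e
  have hS : Continuous fun p : (κ → Ω) × (κ → Ω) =>
      F.sup' hF fun f => |∑ j, (φ f (p.1 j) - φ f (p.2 j))| :=
    .finset_sup'_apply hF fun f _ => by fun_prop
  have hmp := measurePreserving_swapCoords (μ := μ) e
  have hle : ∀ p, F.sup' hF (fun f => |∑ j, (φ f ((swapCoords e p).1 j) -
      φ f ((swapCoords e p).2 j))|) ≤ T p.1 + T p.2 := by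
    refine fun p => Finset.sup'_le hF _ fun f hf => ?_
    have hsigns : ∑ j, (φ f ((swapCoords e p).1 j) - φ f ((swapCoords e p).2 j)) =
        rademacherSum e (fun j => φ f (p.1 j)) - rademacherSum e (fun j => φ f (p.2 j)) := by
      rw [rademacherSum_apply, rademacherSum_apply, ← Finset.sum_sub_distrib]
      refine Finset.sum_congr rfl fun j _ => ?_
      rcases Int.units_eq_one_or (e j) with h | h <;> simp [swapCoords, h, neg_add_eq_sub]
    rw [hsigns]
    exact (abs_sub _ _).trans (add_le_add
      (F.le_sup' (fun f => |rademacherSum e fun j => φ f (p.1 j)|) hf)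
      (F.le_sup' (fun f => |rademacherSum e fun j => φ f (p.2 j)|) hf))
  rw [← hmp.map_eq, integral_map hmp.measurable.aemeasurable hS.aestronglyMeasurable]
  calc _ ≤ ∫ p, (T p.1 + T p.2) ∂P.prod P := by
        refine integral_mono ?_ ((hT.comp_fst P).add (hT.comp_snd P)) hle
        exact hmp.integrable_comp_of_integrable (integrable_of_continuous hS)
    _ = 2 * ∫ x, T x ∂P := by
        rw [integral_add (hT.comp_fst P) (hT.comp_snd P), integral_fun_fst, integral_fun_snd]
        simp [two_mul]

theorem integral_sup'_sampleDeviation_le [DecidableEq κ] (hF : F.Nonempty)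
    (hφ : ∀ f, Continuous (φ f)) :
    ∫ x, F.sup' hF (fun f => sampleDeviation μ (φ f) x) ∂(Measure.pi fun _ : κ => μ) ≤
      ∫ x, 2 * 𝔼 e, F.sup' hF (fun f => |rademacherSum e fun j => φ f (x j)|)
        ∂(Measure.pi fun _ : κ => μ) := by
  refine (integral_sup'_sampleDeviation_le_ghost hF hφ).trans ?_
  calc _ = 𝔼 _e : κ → ℤˣ, ∫ p, F.sup' hF (fun f => |∑ j, (φ f (p.1 j) - φ f (p.2 j))|)
        ∂(Measure.pi fun _ : κ => μ).prod (Measure.pi fun _ : κ => μ) :=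
        (Finset.expect_const Finset.univ_nonempty _).symm
    _ ≤ 𝔼 e : κ → ℤˣ, 2 * ∫ x, F.sup' hF (fun f => |rademacherSum e fun j => φ f (x j)|)
        ∂(Measure.pi fun _ : κ => μ) :=
        Finset.expect_le_expect fun e _ => integral_sup'_abs_sum_sub_swap_le hF hφ e
    _ = _ := by
        simp only [Finset.expect_eq_sum_div_card]
        rw [integral_const_mul, integral_div, integral_finsetSum, ← Finset.mul_sum, mul_div_assoc]
        exact fun e _ => integrable_sup'_abs_rademacherSum hF hφ e

end Symmetrization

/-! ### Interpolation between `L_θ` and `L_r` -/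

section Interpolation

variable {θ h t : ℝ} {r : ℕ}

lemma two_rpow_le_four (hθ : θ ≤ 2) : (2 : ℝ) ^ θ ≤ 4 :=
  (Real.rpow_le_rpow_of_exponent_le one_le_two hθ).trans_eq (by norm_num)

lemma rpow_le_mul_one_add_div_pow (hh : 0 ≤ h) (ht : 0 < t) (hθ : 0 < θ) (hr : θ ≤ r) :
    h ^ θ ≤ t ^ θ * (1 + (h / t) ^ r) := by
  have hy : 0 ≤ h / t := by positivity
  calc h ^ θ = t ^ θ * (h / t) ^ θ := by rw [← Real.mul_rpow ht.le hy, mul_div_cancel₀ _ ht.ne']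
    _ ≤ t ^ θ * (1 + (h / t) ^ r) := by
        gcongr
        rcases le_total (h / t) 1 with h1 | h1
        · exact (Real.rpow_le_one hy h1 hθ.le).trans (le_add_of_nonneg_right (by positivity))
        · rw [← Real.rpow_natCast]
          exact (Real.rpow_le_rpow_of_exponent_le h1 hr).trans (le_add_of_nonneg_left zero_le_one)

lemma sq_le_rpow_mul_rpow_add_sq_mul_div_pow (hh : 0 ≤ h) (ht : 0 < t) (hθ : θ ≤ 2)
    (hr : 2 ≤ r) : h ^ 2 ≤ t ^ (2 - θ) * h ^ θ + t ^ 2 * (h / t) ^ r := by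
  rcases le_total h t with hht | hth
  · exact (sq_le_rpow_mul_rpow hθ hh hht).trans (le_add_of_nonneg_right (by positivity))
  · refine le_add_of_nonneg_of_le (by positivity) ?_
    calc h ^ 2 = t ^ 2 * (h / t) ^ 2 := by field_simp
      _ ≤ t ^ 2 * (h / t) ^ r := by
          gcongr
          exact (one_le_div ht).mpr hth

lemma abs_sub_rpow_le (hθ : 0 ≤ θ) (hθ2 : θ ≤ 2) (a b : ℝ) :
    |a - b| ^ θ ≤ 4 * |a| ^ θ + 4 * |b| ^ θ := by
  have two_rpow_le := two_rpow_le_four hθ2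
  have sub_le_max : |a - b| ≤ 2 * max |a| |b| := by
    linarith [abs_sub a b, le_max_left |a| |b|, le_max_right |a| |b|]
  calc |a - b| ^ θ ≤ (2 * max |a| |b|) ^ θ := by gcongr
    _ = 2 ^ θ * max (|a| ^ θ) (|b| ^ θ) := by
        rw [Real.mul_rpow zero_le_two (by positivity),
          (Real.monotoneOn_rpow_Ici_of_exponent_nonneg hθ).map_max (abs_nonneg a) (abs_nonneg b)]
    _ ≤ 4 * (|a| ^ θ + |b| ^ θ) := by
        gcongr
        exact max_le_add_of_nonneg (by positivity) (by positivity)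
    _ = 4 * |a| ^ θ + 4 * |b| ^ θ := by ring

variable {Ω : Type*} [TopologicalSpace Ω] [CompactSpace Ω] [MeasurableSpace Ω] [BorelSpace Ω]
  {μ : Measure Ω} [IsFiniteMeasure μ] {f g : Ω → ℝ}

lemma integral_sq_le_rpow_mul_add (hf : Continuous f) (ht : 0 < t) (hθ : 0 ≤ θ) (hθ2 : θ ≤ 2)
    (hr : 2 ≤ r) :
    ∫ ω, f ω ^ 2 ∂μ ≤ t ^ (2 - θ) * ∫ ω, |f ω| ^ θ ∂μ + t ^ 2 / t ^ r * ∫ ω, |f ω| ^ r ∂μ := by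
  have hint_θ : Integrable (fun ω => t ^ (2 - θ) * |f ω| ^ θ) μ :=
    (integrable_of_continuous (hf.abs.rpow_const fun _ => .inr hθ)).const_mul _
  have hint_r : Integrable (fun ω => t ^ 2 / t ^ r * |f ω| ^ r) μ :=
    (integrable_of_continuous (by fun_prop)).const_mul _
  rw [← integral_const_mul, ← integral_const_mul, ← integral_add hint_θ hint_r]
  refine integral_mono (integrable_of_continuous (by fun_prop)) (hint_θ.add hint_r) fun ω => ?_
  have h := sq_le_rpow_mul_rpow_add_sq_mul_div_pow (abs_nonneg (f ω)) ht hθ2 hr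
  rwa [sq_abs, div_pow, mul_div_assoc', mul_div_right_comm] at h

lemma integral_abs_sub_rpow_le (hf : Continuous f) (hg : Continuous g) (hθ : 0 ≤ θ)
    (hθ2 : θ ≤ 2) :
    ∫ ω, |f ω - g ω| ^ θ ∂μ ≤ 4 * ∫ ω, |f ω| ^ θ ∂μ + 4 * ∫ ω, |g ω| ^ θ ∂μ := by
  have hint {k : Ω → ℝ} (hk : Continuous k) : Integrable (fun ω => |k ω| ^ θ) μ :=
    integrable_of_continuous (hk.abs.rpow_const fun _ => .inr hθ)
  rw [← integral_const_mul, ← integral_const_mul,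
    ← integral_add ((hint hf).const_mul 4) ((hint hg).const_mul 4)]
  exact integral_mono (hint (hf.sub hg)) (((hint hf).const_mul 4).add ((hint hg).const_mul 4))
    fun ω => abs_sub_rpow_le hθ hθ2 (f ω) (g ω)

end Interpolation

/-! ### The Rademacher process of a fixed sample -/

section SampleSeminorm

variable {E Ω κ : Type*} [NormedAddCommGroup E] [InnerProductSpace ℝ E] [TopologicalSpace Ω]
  [MeasurableSpace Ω] [Fintype κ] {μ : Measure Ω} {u : Ω → E} {x : κ → Ω}
  {H M : ℝ} {r : ℕ} {ρ : Seminorm ℝ E} {z : E}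

/-- A continuous map `u` identifying `E` isometrically with the subspace `{⟪u, z⟫ | z ∈ E}` of
`L_2(μ)`, bounded by `H`; this is how a subspace of `C(Ω)` in the class `NI_{2,∞}(H)` is encoded. -/
structure IsParsevalFrame (μ : Measure Ω) (u : Ω → E) (H : ℝ) : Prop where
  continuous : Continuous u
  norm_le : ∀ ω, ‖u ω‖ ≤ H
  integral_inner_sq : ∀ z, ∫ ω, inner ℝ (u ω) z ^ 2 ∂μ = ‖z‖ ^ 2

/-- `ρ` is the seminorm that `E` inherits from `L_r(μ + μ_x)` through `z ↦ ⟪u, z⟫`, where `μ_x` is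
the empirical measure of the sample `x`. -/
structure IsSampleSeminorm (μ : Measure Ω) (u : Ω → E) (x : κ → Ω) (r : ℕ)
    (ρ : Seminorm ℝ E) : Prop where
  continuous : Continuous ρ
  pow_eq : ∀ z, ρ z ^ r = ∫ ω, |inner ℝ (u ω) z| ^ r ∂(μ + empiricalMeasure x)

namespace IsSampleSeminorm

variable [BorelSpace Ω] [IsProbabilityMeasure μ] [Nonempty κ]

lemma half_le_stdGaussian_closedBall [FiniteDimensional ℝ E] [MeasurableSpace E] [BorelSpace E]
    (hρ : IsSampleSeminorm μ u x r ρ) (hu : IsParsevalFrame μ u H) (hH : 0 < H) (hr : r ≠ 0) :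
    1 / 2 ≤ (ProbabilityTheory.stdGaussian E).real (ρ.closedBall 0 (16 * √r * H)) :=
  half_le_stdGaussian_seminorm_closedBall (ν := μ + empiricalMeasure x)
    (by rw [measureReal_add_apply]; norm_num) hu.continuous.measurable hH hu.norm_le hr
    hρ.continuous hρ.pow_eq

variable [CompactSpace Ω]

lemma pow_eq_add (hρ : IsSampleSeminorm μ u x r ρ) (hu : Continuous u) :
    ρ z ^ r = ∫ ω, |inner ℝ (u ω) z| ^ r ∂μ +
      (∑ j, |inner ℝ (u (x j)) z| ^ r) / Fintype.card κ := by
  have hcont : Continuous fun ω => |inner ℝ (u ω) z| ^ r := by fun_prop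
  rw [hρ.pow_eq, integral_add_measure (integrable_of_continuous hcont)
    (integrable_of_continuous hcont), integral_empiricalMeasure x hcont.measurable]

lemma integral_pow_le (hρ : IsSampleSeminorm μ u x r ρ) (hu : Continuous u) :
    ∫ ω, |inner ℝ (u ω) z| ^ r ∂μ ≤ ρ z ^ r := by
  rw [hρ.pow_eq_add hu]
  exact le_add_of_nonneg_right (by positivity)

lemma sum_pow_le (hρ : IsSampleSeminorm μ u x r ρ) (hu : Continuous u) :
    ∑ j, |inner ℝ (u (x j)) z| ^ r ≤ Fintype.card κ * ρ z ^ r := by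
  rw [← div_le_iff₀' (by simp [Fintype.card_pos]), hρ.pow_eq_add hu]
  exact le_add_of_nonneg_left (integral_nonneg fun ω => by positivity)

lemma le_two_mul (hρ : IsSampleSeminorm μ u x r ρ) (hu : Continuous u) (hr : r ≠ 0) (hM : 0 ≤ M)
    (hz : ∀ ω, |inner ℝ (u ω) z| ≤ M) : ρ z ≤ 2 * M := by
  refine le_of_pow_le_pow_left₀ hr (by positivity) ?_
  have hcard : (0 : ℝ) < Fintype.card κ := by simp [Fintype.card_pos]
  calc ρ z ^ r ≤ M ^ r + M ^ r := by
        rw [hρ.pow_eq_add hu]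
        gcongr
        · calc ∫ ω, |inner ℝ (u ω) z| ^ r ∂μ ≤ ∫ _, M ^ r ∂μ :=
                integral_mono (integrable_of_continuous (by fun_prop)) (integrable_const _)
                  fun ω => pow_le_pow_left₀ (abs_nonneg _) (hz ω) r
            _ = M ^ r := by simp
        · rw [div_le_iff₀' hcard]
          calc ∑ j, |inner ℝ (u (x j)) z| ^ r ≤ ∑ _ : κ, M ^ r := by gcongr; exact hz _
            _ = Fintype.card κ * M ^ r := by simp
    _ = 2 * M ^ r := by ring
    _ ≤ 2 ^ r * M ^ r := by gcongr; exact le_self_pow₀ one_le_two hr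
    _ = (2 * M) ^ r := (mul_pow _ _ _).symm

lemma norm_le_two_mul (hρ : IsSampleSeminorm μ u x r ρ) (hu : IsParsevalFrame μ u H)
    (hr : 2 ≤ r) : ‖z‖ ≤ 2 * ρ z := by
  have hcont := hu.continuous
  refine le_of_forall_pos_le_add fun ε hε => ?_
  set t := ρ z + ε / 2 with ht
  have ht0 : 0 < t := add_pos_of_nonneg_of_pos (apply_nonneg ρ z) (by positivity)
  have hsq : ‖z‖ ^ 2 ≤ 2 * t ^ 2 := by
    calc ‖z‖ ^ 2 ≤ t ^ 2 + t ^ 2 / t ^ r * ∫ ω, |inner ℝ (u ω) z| ^ r ∂μ := by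
          rw [← hu.integral_inner_sq]
          simpa using integral_sq_le_rpow_mul_add (μ := μ) (f := fun ω => inner ℝ (u ω) z)
            (by fun_prop) ht0 le_rfl zero_le_two hr
      _ ≤ t ^ 2 + t ^ 2 / t ^ r * t ^ r := by
          gcongr
          exact (hρ.integral_pow_le hcont).trans (by gcongr; linarith)
      _ = 2 * t ^ 2 := by field_simp; ring
  have : ‖z‖ ≤ 2 * t := by nlinarith [norm_nonneg z]
  linarith

end IsSampleSeminorm

end SampleSeminorm

namespace HasGrowth

variable {κ : Type*} [Fintype κ] {Φ : ℝ → ℝ} {θ A q M S t : ℝ} {r : ℕ} {a b h : κ → ℝ}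

lemma sum_sq_sub_le (hΦ : HasGrowth Φ θ A q) (hM : 0 < M) (hr : 2 ≤ r) (hMr : Φ M ≤ 2 ^ r)
    (ha : ∀ j, a j ∈ Set.Icc 0 M) (hb : ∀ j, b j ∈ Set.Icc 0 M) (hh : ∀ j, |a j - b j| ≤ h j)
    (ht : 0 < t) (hhS : ∑ j, h j ^ r ≤ S * t ^ r) (haS : ∑ j, Φ (a j) ≤ S)
    (hbS : ∑ j, Φ (b j) ≤ S) :
    ∑ j, (Φ (a j) - Φ (b j)) ^ 2 ≤ 16 * (q ^ 2 * A * Φ M / M ^ θ) * S * t ^ θ := by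
  have hΦM := hΦ.pos hM
  have hA := hΦ.A_pos
  have hS : 0 ≤ S := (Finset.sum_nonneg fun j _ => hΦ.nonneg _ (ha j).1).trans haS
  have two_rpow_le := two_rpow_le_four hΦ.θ_le_two
  set G := q ^ 2 * A * Φ M / M ^ θ
  have pointwise (j) : (Φ (a j) - Φ (b j)) ^ 2 ≤
      G * (2 * t) ^ θ * (Φ (a j) + Φ (b j) + 2 * Φ M / (2 * t) ^ r * h j ^ r) := by
    have h_nonneg : 0 ≤ h j := (abs_nonneg _).trans (hh j)
    have sum_nonneg := add_nonneg (hΦ.nonneg _ (ha j).1) (hΦ.nonneg _ (hb j).1)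
    have sum_le := add_le_add (hΦ.mono (ha j).1 hM.le (ha j).2) (hΦ.mono (hb j).1 hM.le (hb j).2)
    calc (Φ (a j) - Φ (b j)) ^ 2 ≤ G * |a j - b j| ^ θ * (Φ (a j) + Φ (b j)) :=
          hΦ.sq_sub_le hM (ha j).1 (hb j).1 (ha j).2 (hb j).2
      _ ≤ G * h j ^ θ * (Φ (a j) + Φ (b j)) := by
          gcongr
          · exact hΦ.θ_pos.le
          · exact hh j
      _ ≤ G * ((2 * t) ^ θ * (1 + (h j / (2 * t)) ^ r)) * (Φ (a j) + Φ (b j)) := by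
          gcongr
          exact rpow_le_mul_one_add_div_pow h_nonneg (by positivity) hΦ.θ_pos
            (hΦ.θ_le_two.trans (by exact_mod_cast hr))
      _ = G * (2 * t) ^ θ *
          (Φ (a j) + Φ (b j) + (Φ (a j) + Φ (b j)) * (h j / (2 * t)) ^ r) := by ring
      _ ≤ G * (2 * t) ^ θ * (Φ (a j) + Φ (b j) + (Φ M + Φ M) * (h j / (2 * t)) ^ r) := by gcongr
      _ = G * (2 * t) ^ θ * (Φ (a j) + Φ (b j) + 2 * Φ M / (2 * t) ^ r * h j ^ r) := by
          rw [div_pow]; ring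
  calc ∑ j, (Φ (a j) - Φ (b j)) ^ 2
      ≤ G * (2 * t) ^ θ *
          (∑ j, Φ (a j) + ∑ j, Φ (b j) + 2 * Φ M / (2 * t) ^ r * ∑ j, h j ^ r) := by
        rw [Finset.mul_sum, ← Finset.sum_add_distrib, ← Finset.sum_add_distrib, Finset.mul_sum]
        exact Finset.sum_le_sum fun j _ => pointwise j
    _ ≤ G * (2 * t) ^ θ * (S + S + 2 * Φ M / (2 * t) ^ r * (S * t ^ r)) := by gcongr
    _ = G * (2 ^ θ * t ^ θ) * (2 * S + 2 * S * (Φ M / 2 ^ r)) := by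
        rw [Real.mul_rpow zero_le_two ht.le]
        field_simp
        ring
    _ ≤ G * (4 * t ^ θ) * (2 * S + 2 * S * 1) := by
        gcongr
        exact div_le_one_of_le₀ hMr (by positivity)
    _ = 16 * G * S * t ^ θ := by ring

end HasGrowth

/-- The radii at which the chaining is carried out. -/
noncomputable def chainScale (M : ℝ) (k : ℕ) : ℝ := 4 * M * 2⁻¹ ^ k

section ChainScale

variable {Φ : ℝ → ℝ} {θ A q H M : ℝ} {k : ℕ}

lemma chainScale_succ : chainScale M (k + 1) = chainScale M k / 2 := by
  rw [chainScale, chainScale, pow_succ]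
  ring

lemma chainScale_pos (hM : 0 < M) : 0 < chainScale M k := by
  unfold chainScale
  positivity

lemma chainScale_antitone (hM : 0 < M) : Antitone (chainScale M) :=
  antitone_nat_of_succ_le fun _ => by
    rw [chainScale_succ]
    exact half_le_self (chainScale_pos hM).le

lemma chainScale_rpow (hM : 0 < M) :
    chainScale M k ^ θ = (4 * M) ^ θ * ((2 : ℝ) ^ θ)⁻¹ ^ k := by
  rw [chainScale, Real.mul_rpow (by positivity) (by positivity), ← Real.rpow_pow_comm (by norm_num),
    Real.inv_rpow zero_le_two]

lemma HasGrowth.chainScale_supBound_rpow (hΦ : HasGrowth Φ θ A q) (hH : 1 ≤ H) :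
    chainScale (supBound Φ θ A H) k ^ θ =
      (4 * momentBound Φ A) ^ θ * H ^ 2 * ((2 : ℝ) ^ θ)⁻¹ ^ k := by
  have hK := hΦ.one_le_momentBound
  rw [chainScale_rpow (zero_lt_one.trans_le (hΦ.one_le_supBound hH)), supBound, ← mul_assoc,
    Real.mul_rpow (by positivity) (by positivity), ← Real.rpow_mul (by positivity),
    div_mul_cancel₀ _ hΦ.θ_pos.ne', Real.rpow_two]

lemma HasGrowth.chainScale_supBound_rpow_le (hΦ : HasGrowth Φ θ A q) (hH : 1 ≤ H) :
    chainScale (supBound Φ θ A H) k ^ θ ≤ 16 * momentBound Φ A ^ 2 * H ^ 2 := by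
  have hK := hΦ.one_le_momentBound
  have decay : ((2 : ℝ) ^ θ)⁻¹ ^ k ≤ 1 := by
    refine pow_le_one₀ (by positivity) (inv_le_one_of_one_le₀ ?_)
    exact Real.one_le_rpow one_le_two hΦ.θ_pos.le
  calc chainScale (supBound Φ θ A H) k ^ θ
      ≤ (4 * momentBound Φ A) ^ (2 : ℝ) * H ^ 2 * 1 := by
        rw [hΦ.chainScale_supBound_rpow hH]
        gcongr
        · linarith
        · exact hΦ.θ_le_two
    _ = 16 * momentBound Φ A ^ 2 * H ^ 2 := by rw [Real.rpow_two]; ring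

end ChainScale

/-- The functions `⟪u, z⟫` with `∫ Φ |⟪u, z⟫| ≤ 1`, encoded as a subset of `E`. -/
def phiBall {E Ω : Type*} [NormedAddCommGroup E] [InnerProductSpace ℝ E] [MeasurableSpace Ω]
    (μ : Measure Ω) (Φ : ℝ → ℝ) (u : Ω → E) : Set E :=
  {z | ∫ ω, Φ |inner ℝ (u ω) z| ∂μ ≤ 1}

/-- An exponent `r` so large that `2 ^ r` absorbs the squared ratio `H ^ 2` of the uniform and
quadratic norms and the largest value of `Φ |f|`. -/
structure IsLargeExponent (Φ : ℝ → ℝ) (θ A H : ℝ) (r : ℕ) : Prop where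
  two_le : 2 ≤ r
  sq_le : H ^ 2 ≤ 2 ^ r
  map_supBound_le : Φ (supBound Φ θ A H) ≤ 2 ^ r

/-- The square of the factor in front of `√S` in the bound for the Rademacher process of a sample
with `∑ j, Φ |f (x j)| ≤ S`; `N` stands for the dimension. -/
noncomputable def chainingConst (Φ : ℝ → ℝ) (θ A q H : ℝ) (r N : ℕ) : ℝ :=
  10 ^ 8 * q ^ 2 * A * momentBound Φ A * r * (2 * Nat.clog 2 N + 16) ^ 2 * Φ (supBound Φ θ A H)

lemma HasGrowth.chainingConst_nonneg {Φ : ℝ → ℝ} {θ A q H : ℝ} {r N : ℕ}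
    (hΦ : HasGrowth Φ θ A q) (hH : 1 ≤ H) : 0 ≤ chainingConst Φ θ A q H r N := by
  have hA := hΦ.A_pos
  have hK := hΦ.one_le_momentBound
  have hΦM := hΦ.pos (zero_lt_one.trans_le (hΦ.one_le_supBound hH))
  unfold chainingConst
  positivity

section FixedSample

open scoped BigOperators

variable {E Ω κ : Type*} [NormedAddCommGroup E] [InnerProductSpace ℝ E] [TopologicalSpace Ω]
  [CompactSpace Ω] [MeasurableSpace Ω] [BorelSpace Ω] [Fintype κ] {μ : Measure Ω}
  [IsProbabilityMeasure μ] {Φ : ℝ → ℝ} {θ A q H S t : ℝ} {r k : ℕ} {u : Ω → E} {x : κ → Ω}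
  {ρ : Seminorm ℝ E} {f g z : E} {F : Finset E}

lemma HasGrowth.abs_inner_le_supBound (hΦ : HasGrowth Φ θ A q) (hu : IsParsevalFrame μ u H)
    (hH : 0 ≤ H) (hz : z ∈ phiBall μ Φ u) (ω : Ω) : |inner ℝ (u ω) z| ≤ supBound Φ θ A H := by
  have hcont := hu.continuous
  refine hΦ.abs_le_of_integral_le_one (f := fun ω => inner ℝ (u ω) z) (by fun_prop) hH
    (fun ω => ?_) hz ω
  rw [hu.integral_inner_sq, Real.sqrt_sq (norm_nonneg z)]
  exact (abs_real_inner_le_norm _ _).trans (by gcongr; exact hu.norm_le ω)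

lemma HasGrowth.norm_sub_sq_le [Nonempty κ] (hΦ : HasGrowth Φ θ A q)
    (hu : IsParsevalFrame μ u H) (hr : IsLargeExponent Φ θ A H r)
    (hρ : IsSampleSeminorm μ u x r ρ) (hf : f ∈ phiBall μ Φ u) (hg : g ∈ phiBall μ Φ u)
    (ht : 0 < t) (htθ : t ^ θ ≤ 16 * momentBound Φ A ^ 2 * H ^ 2) (hfg : ρ (f - g) ≤ t) :
    ‖f - g‖ ^ 2 ≤ 80 * momentBound Φ A ^ 2 * t ^ (2 - θ) := by
  set K := momentBound Φ A
  have hK : 1 ≤ K := hΦ.one_le_momentBound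
  have hθ := hΦ.θ_pos
  have hcont := hu.continuous
  have hcont_inner (z : E) : Continuous fun ω => inner ℝ (u ω) z := by fun_prop
  have low_moment : ∫ ω, |inner ℝ (u ω) (f - g)| ^ θ ∂μ ≤ 8 * K := by
    simp only [inner_sub_right]
    linarith [integral_abs_sub_rpow_le (μ := μ) (hcont_inner f) (hcont_inner g) hθ.le
      hΦ.θ_le_two, hΦ.integral_rpow_le (hcont_inner f) hf, hΦ.integral_rpow_le (hcont_inner g) hg]
  have high_moment : ∫ ω, |inner ℝ (u ω) (f - g)| ^ r ∂μ ≤ t ^ r :=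
    (hρ.integral_pow_le hcont).trans (by gcongr)
  have two_rpow_le : (2 : ℝ) ^ (2 - θ) ≤ 2 :=
    (Real.rpow_le_rpow_of_exponent_le one_le_two (by linarith [hΦ.one_lt_θ])).trans_eq
      (Real.rpow_one 2)
  calc ‖f - g‖ ^ 2 ≤ (2 * t) ^ (2 - θ) * (8 * K) + (2 * t) ^ 2 / (2 * t) ^ r * t ^ r := by
        rw [← hu.integral_inner_sq]
        refine (integral_sq_le_rpow_mul_add (hcont_inner (f - g)) (mul_pos two_pos ht) hθ.le
          hΦ.θ_le_two hr.two_le).trans ?_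
        gcongr
    _ = 2 ^ (2 - θ) * t ^ (2 - θ) * (8 * K) + 4 * (t ^ (2 - θ) * t ^ θ) / 2 ^ r := by
        rw [← Real.rpow_add ht, sub_add_cancel, Real.rpow_two, Real.mul_rpow zero_le_two ht.le]
        field_simp
        ring
    _ ≤ 2 * t ^ (2 - θ) * (8 * K ^ 2) + 4 * (t ^ (2 - θ) * (16 * K ^ 2 * 2 ^ r)) / 2 ^ r := by
        gcongr
        · exact le_self_pow₀ hK two_ne_zero
        · exact htθ.trans (by gcongr; exact hr.sq_le)
    _ = 80 * K ^ 2 * t ^ (2 - θ) := by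
        field_simp
        ring

/-- The exponent in the dual Sudakov inequality, for the ratio of radii in
`HasGrowth.norm_sub_sq_le`. -/
lemma HasGrowth.coarse_exponent_le (hΦ : HasGrowth Φ θ A q) (hH : 1 ≤ H) :
    2 * (16 * √r * H) ^ 2 *
        (80 * momentBound Φ A ^ 2 * chainScale (supBound Φ θ A H) k ^ (2 - θ)) /
        (chainScale (supBound Φ θ A H) k / 2) ^ 2 ≤
      40960 * r * momentBound Φ A * (2 ^ θ) ^ k := by
  have hK := hΦ.one_le_momentBound
  have rpow_eq := hΦ.chainScale_supBound_rpow (k := k) hH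
  have ht : 0 < chainScale (supBound Φ θ A H) k :=
    chainScale_pos (zero_lt_one.trans_le (hΦ.one_le_supBound hH))
  set K := momentBound Φ A
  set t := chainScale (supBound Φ θ A H) k
  calc 2 * (16 * √r * H) ^ 2 * (80 * K ^ 2 * t ^ (2 - θ)) / (t / 2) ^ 2
      = 163840 * r * H ^ 2 * K ^ 2 / t ^ θ := by
        rw [mul_pow, mul_pow, Real.sq_sqrt (by positivity), Real.rpow_sub ht, Real.rpow_two]
        field_simp
        ring
    _ = 40960 * r * K * (2 ^ θ) ^ k * (4 * K) / (4 * K) ^ θ := by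
        rw [rpow_eq, inv_pow]
        field_simp
        ring
    _ ≤ 40960 * r * K * (2 ^ θ) ^ k * (4 * K) / (4 * K) := by
        gcongr
        exact Real.self_le_rpow_of_one_le (by linarith) hΦ.one_lt_θ.le
    _ = 40960 * r * K * (2 ^ θ) ^ k := by field_simp

lemma HasGrowth.sum_sq_sub_le_chainScale [Nonempty κ] (hΦ : HasGrowth Φ θ A q)
    (hu : IsParsevalFrame μ u H) (hH : 1 ≤ H) (hr : IsLargeExponent Φ θ A H r)
    (hρ : IsSampleSeminorm μ u x r ρ) (hκS : Fintype.card κ ≤ S) (hf : f ∈ phiBall μ Φ u)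
    (hg : g ∈ phiBall μ Φ u) (hfS : ∑ j, Φ |inner ℝ (u (x j)) f| ≤ S)
    (hgS : ∑ j, Φ |inner ℝ (u (x j)) g| ≤ S)
    (hfg : ρ (f - g) ≤ 2 * chainScale (supBound Φ θ A H) k) :
    ∑ j, (Φ |inner ℝ (u (x j)) f| - Φ |inner ℝ (u (x j)) g|) ^ 2 ≤
      1024 * q ^ 2 * A * Φ (supBound Φ θ A H) * S * (2 ^ θ)⁻¹ ^ k := by
  have hM : 0 < supBound Φ θ A H := zero_lt_one.trans_le (hΦ.one_le_supBound hH)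
  have ht := chainScale_pos (k := k) hM
  have hS : 0 ≤ S := (Nat.cast_nonneg _).trans hκS
  have abs_le := fun z (hz : z ∈ phiBall μ Φ u) j =>
    hΦ.abs_inner_le_supBound hu (by linarith) hz (x j)
  have sum_pow_le : ∑ j, |inner ℝ (u (x j)) (f - g)| ^ r ≤
      S * (2 * chainScale (supBound Φ θ A H) k) ^ r :=
    (hρ.sum_pow_le hu.continuous).trans (by gcongr)
  have sum_sq_le := hΦ.sum_sq_sub_le hM hr.two_le hr.map_supBound_le
    (fun j => ⟨abs_nonneg _, abs_le f hf j⟩) (fun j => ⟨abs_nonneg _, abs_le g hg j⟩)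
    (fun j => by rw [inner_sub_right]; exact abs_abs_sub_abs_le_abs_sub _ _)
    (mul_pos two_pos ht) sum_pow_le hfS hgS
  have hΦM := hΦ.pos hM
  have hA := hΦ.A_pos
  set M := supBound Φ θ A H
  calc ∑ j, (Φ |inner ℝ (u (x j)) f| - Φ |inner ℝ (u (x j)) g|) ^ 2
      ≤ 16 * (q ^ 2 * A * Φ M / M ^ θ) * S * (2 * chainScale M k) ^ θ := sum_sq_le
    _ = 16 * q ^ 2 * A * Φ M * S * (2 ^ θ)⁻¹ ^ k * (2 * 4) ^ θ := by
        rw [Real.mul_rpow zero_le_two ht.le, chainScale_rpow hM, Real.mul_rpow (by norm_num) hM.le,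
          Real.mul_rpow zero_le_two (by norm_num)]
        field_simp
    _ ≤ 16 * q ^ 2 * A * Φ M * S * (2 ^ θ)⁻¹ ^ k * (2 * 4) ^ (2 : ℝ) := by
        gcongr
        · norm_num
        · exact hΦ.θ_le_two
    _ = 1024 * q ^ 2 * A * Φ M * S * (2 ^ θ)⁻¹ ^ k := by
        norm_num
        ring

variable [FiniteDimensional ℝ E] [MeasurableSpace E] [BorelSpace E]

/-- At coarse scales the dual Sudakov inequality bounds the packing numbers independently of the
dimension. -/
lemma HasGrowth.localPackingLE_coarse [Nonempty κ] (hΦ : HasGrowth Φ θ A q)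
    (hu : IsParsevalFrame μ u H) (hH : 1 ≤ H) (hr : IsLargeExponent Φ θ A H r)
    (hρ : IsSampleSeminorm μ u x r ρ) (hF : (F : Set E) ⊆ phiBall μ Φ u) :
    LocalPackingLE ρ F (chainScale (supBound Φ θ A H) k) (chainScale (supBound Φ θ A H) (k + 1))
      (Real.exp (40962 * r * momentBound Φ A * (2 ^ θ) ^ k)) := by
  intro g hg S hS hSg hsep
  have hK := hΦ.one_le_momentBound
  have hr_two := hr.two_le
  have ht_pos : ∀ i, 0 < chainScale (supBound Φ θ A H) i := fun i =>
    chainScale_pos (zero_lt_one.trans_le (hΦ.one_le_supBound hH))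
  have card_le := card_le_two_mul_exp_of_pairwise_lt_seminorm hρ.continuous
    (κ := 16 * √r * H) (by positivity) (ht_pos (k + 1))
    (hρ.half_le_stdGaussian_closedBall hu (by linarith) (by omega))
    (fun a ha => hΦ.norm_sub_sq_le hu hr hρ (hF (hS ha)) (hF hg) (ht_pos k)
      (hΦ.chainScale_supBound_rpow_le hH) (hSg a ha)) hsep
  set K := momentBound Φ A
  have exponent_le := hΦ.coarse_exponent_le (k := k) (r := r) hH
  have one_le_pow : 1 ≤ ((2 : ℝ) ^ θ) ^ k := one_le_pow₀ (Real.one_le_rpow one_le_two hΦ.θ_pos.le)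
  have one_le : 1 ≤ r * K * (2 ^ θ) ^ k :=
    one_le_mul_of_one_le_of_one_le (one_le_mul_of_one_le_of_one_le (by norm_cast; omega) hK)
      one_le_pow
  rw [chainScale_succ] at card_le
  calc (S.card : ℝ) ≤ 2 * Real.exp (40960 * r * K * (2 ^ θ) ^ k) :=
        card_le.trans (by gcongr)
    _ ≤ Real.exp 1 * Real.exp (40960 * r * K * (2 ^ θ) ^ k) := by
        gcongr
        linarith [Real.add_one_le_exp 1]
    _ ≤ Real.exp (40962 * r * K * (2 ^ θ) ^ k) := by
        rw [← Real.exp_add]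
        gcongr
        linarith

/-- At fine scales the packing numbers are bounded by comparing volumes. -/
lemma IsSampleSeminorm.localPackingLE_fine [Nonempty κ] (hρ : IsSampleSeminorm μ u x r ρ)
    (hu : IsParsevalFrame μ u H) (hr : 2 ≤ r) (ht : 0 < t) :
    LocalPackingLE ρ F t (t / 2) (5 ^ Module.finrank ℝ E) := by
  intro g _ S _ hSg hsep
  have h := card_le_pow_finrank_of_pairwise_lt_seminorm hρ.continuous
    (fun z => hρ.norm_le_two_mul hu hr) (half_pos ht) ht.le hSg hsep
  rwa [show 1 + 2 * t / (t / 2) = 5 by field_simp; norm_num] at h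

lemma five_pow_le_exp_mul_rpow_pow_clog {c : ℝ} (hθ : 1 ≤ θ) (hc : 2 ≤ c) (N : ℕ) :
    (5 : ℝ) ^ N ≤ Real.exp (c * (2 ^ θ) ^ Nat.clog 2 N) := by
  have five_le : (5 : ℝ) ≤ Real.exp 2 := by
    rw [show (2 : ℝ) = 1 + 1 by norm_num, Real.exp_add]
    nlinarith [Real.exp_one_gt_d9]
  have N_le : (N : ℝ) ≤ (2 ^ θ) ^ Nat.clog 2 N := by
    calc (N : ℝ) ≤ 2 ^ Nat.clog 2 N := by exact_mod_cast Nat.le_pow_clog one_lt_two N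
      _ ≤ (2 ^ θ) ^ Nat.clog 2 N := by
          gcongr
          exact Real.self_le_rpow_of_one_le one_le_two hθ
  calc (5 : ℝ) ^ N ≤ Real.exp 2 ^ N := by gcongr
    _ = Real.exp (2 * N) := by rw [← Real.exp_nat_mul, mul_comm]
    _ ≤ Real.exp (c * (2 ^ θ) ^ Nat.clog 2 N) := by gcongr

lemma HasGrowth.localPackingLE_chainScale [Nonempty κ] (hΦ : HasGrowth Φ θ A q)
    (hu : IsParsevalFrame μ u H) (hH : 1 ≤ H) (hr : IsLargeExponent Φ θ A H r)
    (hρ : IsSampleSeminorm μ u x r ρ) (hF : (F : Set E) ⊆ phiBall μ Φ u) :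
    LocalPackingLE ρ F (chainScale (supBound Φ θ A H) k) (chainScale (supBound Φ θ A H) (k + 1))
      (Real.exp (40962 * r * momentBound Φ A *
        (2 ^ θ) ^ min k (Nat.clog 2 (Module.finrank ℝ E)))) := by
  rcases le_total k (Nat.clog 2 (Module.finrank ℝ E)) with hk | hk
  · rw [min_eq_left hk]
    exact hΦ.localPackingLE_coarse hu hH hr hρ hF
  · rw [min_eq_right hk, chainScale_succ]
    have hr_two : (2 : ℝ) ≤ r := by exact_mod_cast hr.two_le
    refine fun g hg S hS hSg hsep => (hρ.localPackingLE_fine hu hr.two_le (chainScale_pos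
      (zero_lt_one.trans_le (hΦ.one_le_supBound hH))) g hg S hS hSg hsep).trans
      (five_pow_le_exp_mul_rpow_pow_clog hΦ.one_lt_θ.le ?_ _)
    nlinarith [hΦ.one_le_momentBound]

theorem HasGrowth.expect_sup'_abs_rademacherSum_le [DecidableEq κ] [Nonempty κ]
    (hΦ : HasGrowth Φ θ A q) (hu : IsParsevalFrame μ u H) (hH : 1 ≤ H)
    (hr : IsLargeExponent Φ θ A H r) (hF : (F : Set E) ⊆ phiBall μ Φ u) (hF₀ : 0 ∈ F)
    (hκS : Fintype.card κ ≤ S) (hFS : ∀ z ∈ F, ∑ j, Φ |inner ℝ (u (x j)) z| ≤ S) :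
    𝔼 e, F.sup' ⟨0, hF₀⟩ (fun z => |rademacherSum e (fun j => Φ |inner ℝ (u (x j)) z|)|) ≤
      √(chainingConst Φ θ A q H r (Module.finrank ℝ E) * S) := by
  have hM : 0 < supBound Φ θ A H := zero_lt_one.trans_le (hΦ.one_le_supBound hH)
  have hΦM := hΦ.pos hM
  have hq := hΦ.q_pos
  have hA := hΦ.A_pos
  have hK := hΦ.one_le_momentBound
  have hr_two : (2 : ℝ) ≤ r := by exact_mod_cast hr.two_le
  have hS : 0 < S := lt_of_lt_of_le (by simp [Fintype.card_pos]) hκS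
  obtain ⟨ρ, hρ_cont, hρ_pow⟩ := exists_seminorm_pow_eq_integral (μ + empiricalMeasure x)
    hu.continuous (one_le_two.trans hr.two_le)
  have hρ : IsSampleSeminorm μ u x r ρ := ⟨hρ_cont, hρ_pow⟩
  have hc : 1 ≤ 40962 * r * momentBound Φ A := by nlinarith
  have hs : 0 < √(1024 * q ^ 2 * A * Φ (supBound Φ θ A H) * S) := by positivity
  have two_le_rpow : (2 : ℝ) ≤ 2 ^ θ :=
    Real.self_le_rpow_of_one_le one_le_two hΦ.one_lt_θ.le
  refine (expect_sup'_abs_rademacherSum_le_of_geometric ⟨0, hF₀⟩ hF₀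
    (by ext; simp [hΦ.map_zero]) (fun k => (chainScale_pos hM).le) (chainScale_antitone hM)
    two_le_rpow (two_rpow_le_four hΦ.θ_le_two) hc hs
    (fun f hf => (hρ.le_two_mul hu.continuous (by have := hr.two_le; omega) hM.le
      (hΦ.abs_inner_le_supBound hu (by linarith) (hF hf))).trans
      (by rw [chainScale]; linarith))
    (fun k => hΦ.localPackingLE_chainScale hu hH hr hρ hF)
    fun k f hf g hg hfg => ?_).trans ?_
  · rw [Real.sq_sqrt (by positivity)]
    exact hΦ.sum_sq_sub_le_chainScale hu hH hr hρ hκS (hF hf) (hF hg) (hFS f hf) (hFS g hg) hfg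
  · refine Real.le_sqrt_of_sq_le ?_
    rw [mul_pow, mul_pow, Real.sq_sqrt (by positivity), Real.sq_sqrt (by positivity),
      chainingConst]
    have : 0 ≤ q ^ 2 * A * Φ (supBound Φ θ A H) * S * (r * momentBound Φ A) *
        (2 * Nat.clog 2 (Module.finrank ℝ E) + 16) ^ 2 := by positivity
    linarith

end FixedSample

/-! ### Concentration -/

section Concentration

open scoped BigOperators

lemma two_mul_sqrt_mul_le {Q Y δ : ℝ} (hQ : 0 ≤ Q) (hY : 0 ≤ Y) (hδ : 0 < δ) :
    2 * √(Q * Y) ≤ δ * Y + Q / δ := by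
  have h := two_mul_le_add_sq √(δ * Y) √(Q / δ)
  rwa [Real.sq_sqrt (by positivity), Real.sq_sqrt (by positivity), mul_assoc,
    ← Real.sqrt_mul (by positivity), show δ * Y * (Q / δ) = Q * Y by field_simp] at h

lemma exists_forall_sampleDeviation_le {Ω κ ι : Type*} [MeasurableSpace Ω] [TopologicalSpace Ω]
    [CompactSpace Ω] [Fintype κ] {μ : Measure Ω} {φ : ι → Ω → ℝ} (hφ : ∀ f, Continuous (φ f))
    {c : ℝ} (h : ∀ F : Finset ι, ∃ x : κ → Ω, ∀ f ∈ F, sampleDeviation μ (φ f) x ≤ c) :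
    ∃ x : κ → Ω, ∀ f, sampleDeviation μ (φ f) x ≤ c := by
  obtain ⟨x, -, hx⟩ := isCompact_univ.inter_iInter_nonempty
    (fun f => {x : κ → Ω | sampleDeviation μ (φ f) x ≤ c})
    (fun f => isClosed_le (continuous_sampleDeviation (hφ f)) continuous_const)
    fun F => (h F).imp fun x hx => ⟨Set.mem_univ x, Set.mem_iInter₂.mpr hx⟩
  exact ⟨x, fun f => Set.mem_iInter.mp hx f⟩

variable {Ω κ ι : Type*} [MeasurableSpace Ω] [TopologicalSpace Ω] [CompactSpace Ω] [BorelSpace Ω]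
  [SecondCountableTopology Ω] [Fintype κ] {μ : Measure Ω} [IsProbabilityMeasure μ]
  {φ : ι → Ω → ℝ} {F : Finset ι} {Q ε : ℝ}

/-- The Rademacher process is bounded in terms of the sample sums, which are at most
`card κ + sup sampleDeviation`; this turns symmetrization into a quadratic inequality for the
expected deviation. -/
lemma integral_sup'_sampleDeviation_le_mul [DecidableEq κ] (hF : F.Nonempty)
    (hφ : ∀ f, Continuous (φ f)) (hφ_le : ∀ f ∈ F, ∫ ω, φ f ω ∂μ ≤ 1) (hQ : 0 ≤ Q) (hε : 0 < ε)
    (hε2 : ε ≤ 1 / 2) (hκ : 16 * Q / ε ^ 2 ≤ Fintype.card κ)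
    (hrad : ∀ (x : κ → Ω) (S : ℝ), Fintype.card κ ≤ S → (∀ f ∈ F, ∑ j, φ f (x j) ≤ S) →
      𝔼 e, F.sup' hF (fun f => |rademacherSum e fun j => φ f (x j)|) ≤ √(Q * S)) :
    ∫ x, F.sup' hF (fun f => sampleDeviation μ (φ f) x) ∂(Measure.pi fun _ : κ => μ) ≤
      ε * Fintype.card κ := by
  set m := (Fintype.card κ : ℝ)
  set P := Measure.pi fun _ : κ => μ
  set Z : (κ → Ω) → ℝ := fun x => F.sup' hF fun f => sampleDeviation μ (φ f) x
  have hm : 0 ≤ m := Nat.cast_nonneg _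
  have hZ : ∀ x, 0 ≤ Z x := fun x => (abs_nonneg _).trans
    (F.le_sup' (fun f => sampleDeviation μ (φ f) x) hF.choose_spec)
  have hZ_int : Integrable Z P := integrable_of_continuous <|
    .finset_sup'_apply hF fun f _ => continuous_sampleDeviation (hφ f)
  have hZ_add : Integrable (fun x => ε / 4 * (m + Z x)) P :=
    ((integrable_const m).add hZ_int).const_mul _
  have self_bound : ∀ x : κ → Ω,
      2 * 𝔼 e, F.sup' hF (fun f => |rademacherSum e fun j => φ f (x j)|) ≤
        ε / 4 * (m + Z x) + Q / (ε / 4) := by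
    intro x
    have sum_le : ∀ f ∈ F, ∑ j, φ f (x j) ≤ m + Z x := fun f hf => by
      have h := (le_abs_self _).trans (F.le_sup' (fun f => sampleDeviation μ (φ f) x) hf)
      linarith [mul_le_of_le_one_right hm (hφ_le f hf)]
    refine le_trans ?_ (two_mul_sqrt_mul_le hQ (add_nonneg hm (hZ x)) (by positivity))
    gcongr
    exact hrad x _ (le_add_of_nonneg_right (hZ x)) sum_le
  have rad_int : Integrable
      (fun x => 𝔼 e, F.sup' hF (fun f => |rademacherSum e fun j => φ f (x j)|)) P := by
    simp only [Finset.expect_eq_sum_div_card]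
    exact (integrable_finsetSum _ fun e _ =>
      integrable_sup'_abs_rademacherSum hF hφ e).div_const _
  have integral_le : ∫ x, Z x ∂P ≤ ε / 4 * (m + ∫ x, Z x ∂P) + Q / (ε / 4) := by
    calc ∫ x, Z x ∂P ≤ ∫ x, (ε / 4 * (m + Z x) + Q / (ε / 4)) ∂P :=
          (integral_sup'_sampleDeviation_le hF hφ).trans <|
            integral_mono (rad_int.const_mul 2)
              (hZ_add.add (integrable_const _)) self_bound
      _ = ε / 4 * (m + ∫ x, Z x ∂P) + Q / (ε / 4) := by
          rw [integral_add hZ_add (integrable_const _),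
            integral_const_mul, integral_add (integrable_const m) hZ_int]
          simp
  have hQ_le : Q / (ε / 4) ≤ ε / 4 * m := by
    rw [div_le_iff₀ (by positivity)] at hκ ⊢
    linarith
  have integral_nonneg : 0 ≤ ∫ x, Z x ∂P := integral_nonneg hZ
  nlinarith

variable {E : Type*} [NormedAddCommGroup E] [InnerProductSpace ℝ E] [FiniteDimensional ℝ E]
  [MeasurableSpace E] [BorelSpace E] {Φ : ℝ → ℝ} {θ A q H : ℝ} {r : ℕ} {u : Ω → E}

theorem HasGrowth.exists_forall_sampleDeviation_le [Nonempty κ] (hΦ : HasGrowth Φ θ A q)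
    (hu : IsParsevalFrame μ u H) (hH : 1 ≤ H) (hr : IsLargeExponent Φ θ A H r) (hε : 0 < ε)
    (hε2 : ε ≤ 1 / 2)
    (hκ : 16 * chainingConst Φ θ A q H r (Module.finrank ℝ E) / ε ^ 2 ≤ Fintype.card κ) :
    ∃ x : κ → Ω, ∀ z ∈ phiBall μ Φ u,
      sampleDeviation μ (fun ω => Φ |inner ℝ (u ω) z|) x ≤ ε * Fintype.card κ := by
  classical
  have hφ (z : E) : Continuous fun ω => Φ |inner ℝ (u ω) z| :=
    hΦ.continuous_comp_abs.comp (hu.continuous.inner continuous_const)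
  suffices h : ∀ F : Finset (phiBall μ Φ u), ∃ x : κ → Ω, ∀ z ∈ F,
      sampleDeviation μ (fun ω => Φ |inner ℝ (u ω) (z : E)|) x ≤ ε * Fintype.card κ by
    obtain ⟨x, hx⟩ := _root_.exists_forall_sampleDeviation_le (fun z : phiBall μ Φ u => hφ z) h
    exact ⟨x, fun z hz => hx ⟨z, hz⟩⟩
  intro F
  set G : Finset E := insert 0 (F.map (Function.Embedding.subtype _))
  have hG₀ : 0 ∈ G := Finset.mem_insert_self _ _
  have hG : (G : Set E) ⊆ phiBall μ Φ u := by
    have h₀ : (0 : E) ∈ phiBall μ Φ u := by simp [phiBall, hΦ.map_zero]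
    rw [Finset.coe_insert, Set.insert_subset_iff]
    exact ⟨h₀, by simp⟩
  have hint := integral_sup'_sampleDeviation_le_mul (μ := μ) ⟨0, hG₀⟩ hφ (fun z hz => hG hz)
    (hΦ.chainingConst_nonneg hH) hε hε2 hκ
    fun x S => hΦ.expect_sup'_abs_rademacherSum_le hu hH hr hG hG₀
  obtain ⟨x, hx⟩ := exists_le_integral (μ := Measure.pi fun _ : κ => μ) (integrable_of_continuous <|
    .finset_sup'_apply ⟨0, hG₀⟩ fun z _ => continuous_sampleDeviation (κ := κ) (μ := μ) (hφ z))
  have hzG (z) (hz : z ∈ F) : (z : E) ∈ G :=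
    Finset.mem_insert_of_mem (Finset.mem_map_of_mem (Function.Embedding.subtype _) hz)
  exact ⟨x, fun z hz => (G.le_sup' (fun z => sampleDeviation μ (fun ω => Φ |inner ℝ (u ω) z|) x)
    (hzG z hz)).trans (hx.trans hint)⟩

end Concentration

/-! ### Parseval frames of finite-dimensional function spaces -/

lemma abs_le_supNorm {Ω : Type*} [TopologicalSpace Ω] [CompactSpace Ω] {f : Ω → ℝ}
    (hf : Continuous f) (ω : Ω) : |f ω| ≤ supNorm f :=
  le_ciSup (isCompact_range hf.abs).bddAbove ω

section ParsevalFrame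

variable {Ω : Type*} [TopologicalSpace Ω] [CompactSpace Ω] [MeasurableSpace Ω] [BorelSpace Ω]
  {μ : Measure Ω} [IsProbabilityMeasure μ] {X : Submodule ℝ (Ω → ℝ)} {H : ℝ} {N : ℕ}

lemma exists_linearEquiv_norm_sq_eq_integral [FiniteDimensional ℝ X]
    (hX : ∀ f ∈ X, Continuous f) (hinj : ∀ f ∈ X, ∫ ω, f ω ^ 2 ∂μ = 0 → f = 0)
    (hN : Module.finrank ℝ X = N) :
    ∃ L : X ≃ₗ[ℝ] EuclideanSpace ℝ (Fin N), ∀ f, ‖L f‖ ^ 2 = ∫ ω, (f : Ω → ℝ) ω ^ 2 ∂μ := by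
  let A : X →ₗ[ℝ] C(Ω, ℝ) :=
    { toFun := fun f => ⟨f, hX f f.2⟩
      map_add' := fun f g => rfl
      map_smul' := fun c f => rfl }
  let T : X →ₗ[ℝ] Lp ℝ 2 μ := (ContinuousMap.toLp (E := ℝ) 2 μ ℝ).toLinearMap ∘ₗ A
  have norm_T (f : X) : ‖T f‖ ^ 2 = ∫ ω, (f : Ω → ℝ) ω ^ 2 ∂μ := by
    rw [← real_inner_self_eq_norm_sq]
    exact (ContinuousMap.inner_toLp (𝕜 := ℝ) μ (A f) (A f)).trans (by simp [A, sq])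
  have hT : Function.Injective T := by
    refine (injective_iff_map_eq_zero T).mpr fun f hf => Subtype.ext (hinj f f.2 ?_)
    rw [← norm_T, hf, norm_zero, zero_pow two_ne_zero]
  let b := (stdOrthonormalBasis ℝ (LinearMap.range T)).reindex
    (finCongr ((LinearMap.finrank_range_of_inj hT).trans hN))
  refine ⟨(LinearEquiv.ofInjective T hT).trans b.repr.toLinearEquiv, fun f => ?_⟩
  rw [← norm_T]
  exact congrArg (· ^ 2) (b.repr.norm_map _)

/-- The frame is the Riesz representative of the point evaluations. -/
lemma exists_isParsevalFrame (hX : ∀ f ∈ X, Continuous f) (hN : Module.finrank ℝ X = N)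
    (hN₀ : N ≠ 0) (hH : 0 ≤ H) (hsup : ∀ f ∈ X, supNorm f ≤ H * √(∫ ω, f ω ^ 2 ∂μ)) :
    ∃ u : Ω → EuclideanSpace ℝ (Fin N), IsParsevalFrame μ u H ∧
      ∀ f ∈ X, ∃ z, ∀ ω, f ω = inner ℝ (u ω) z := by
  have : FiniteDimensional ℝ X := .of_finrank_pos (by omega)
  have abs_le (f : X) (ω : Ω) : |(f : Ω → ℝ) ω| ≤ H * √(∫ y, (f : Ω → ℝ) y ^ 2 ∂μ) :=
    (abs_le_supNorm (hX f f.2) ω).trans (hsup f f.2)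
  obtain ⟨L, hL⟩ := exists_linearEquiv_norm_sq_eq_integral (μ := μ) hX
    (fun f hf h => funext fun ω => by simpa [h] using abs_le ⟨f, hf⟩ ω) hN
  let eval (ω : Ω) : EuclideanSpace ℝ (Fin N) →L[ℝ] ℝ :=
    (LinearMap.proj ω ∘ₗ X.subtype ∘ₗ L.symm.toLinearMap).toContinuousLinearMap
  set u : Ω → EuclideanSpace ℝ (Fin N) := fun ω => (InnerProductSpace.toDual ℝ _).symm (eval ω)
  have inner_u (ω z) : inner ℝ (u ω) z = (L.symm z : Ω → ℝ) ω :=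
    InnerProductSpace.toDual_symm_apply
  refine ⟨u, ⟨?_, fun ω => ?_, fun z => ?_⟩, fun f hf => ⟨L ⟨f, hf⟩, fun ω => by simp [inner_u]⟩⟩
  · refine (PiLp.homeomorph 2 _).comp_continuous_iff.mp (continuous_pi fun i => ?_)
    have coord : (fun ω => u ω i) = (L.symm (EuclideanSpace.single i 1) : Ω → ℝ) :=
      funext fun ω => by simp [← inner_u, EuclideanSpace.inner_single_right]
    exact coord ▸ hX _ (L.symm _).2
  · rw [LinearIsometryEquiv.norm_map]
    refine (eval ω).opNorm_le_bound hH fun z => (abs_le (L.symm z) ω).trans_eq ?_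
    rw [← hL, L.apply_symm_apply, Real.sqrt_sq (norm_nonneg z)]
  · simp_rw [inner_u]
    rw [← hL, L.apply_symm_apply]

end ParsevalFrame

/-! ### Luxemburg functionals -/

lemma le_of_forall_one_lt_le_rpow_mul {q a b : ℝ} (h : ∀ c : ℝ, 1 < c → a ≤ c ^ q * b) :
    a ≤ b := by
  have hcont : ContinuousAt (fun c : ℝ => c ^ q * b) 1 :=
    (Real.continuousAt_rpow_const 1 q (.inl one_ne_zero)).mul_const b
  have hlim := hcont.tendsto.mono_left (nhdsWithin_le_nhds (s := Set.Ioi 1))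
  rw [Real.one_rpow, one_mul] at hlim
  exact ge_of_tendsto hlim (eventually_mem_nhdsWithin.mono h)

section Luxemburg

variable {Ω : Type*} [MeasurableSpace Ω] {μ : Measure Ω} {Φ : ℝ → ℝ} {f : Ω → ℝ} {l : ℝ}

lemma luxNorm_le_of_integral_le_one (hl : 0 < l) (h : ∫ ω, Φ (|f ω| / l) ∂μ ≤ 1) :
    luxNorm μ Φ f ≤ l :=
  csInf_le ⟨0, fun _ h => h.1.le⟩ ⟨hl, h⟩

lemma luxNorm_zero (hΦ : Φ 0 = 0) : luxNorm μ Φ 0 = 0 := by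
  have : {l : ℝ | 0 < l ∧ ∫ ω, Φ (|(0 : Ω → ℝ) ω| / l) ∂μ ≤ 1} = Set.Ioi 0 := by
    ext l
    simp [hΦ]
  rw [luxNorm, this, csInf_Ioi]

end Luxemburg

namespace IsPhiPrefun

variable {Φ : ℝ → ℝ} {q a c l s t : ℝ} {Ω : Type*} [TopologicalSpace Ω] {f : Ω → ℝ}

lemma continuous_comp_abs_div (hΦ : IsPhiPrefun Φ) (hq : 0 < q) (hdec : DecQ Φ q)
    (hf : Continuous f) (hl : 0 < l) : Continuous fun ω => Φ (|f ω| / l) := by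
  simpa only [Function.comp_def, abs_div, abs_of_pos hl] using
    (hΦ.continuous_comp_abs hq hdec).comp (hf.div_const l)

variable [CompactSpace Ω] [MeasurableSpace Ω] {μ : Measure Ω} [IsProbabilityMeasure μ]

lemma exists_integral_le_one (hΦ : IsPhiPrefun Φ) (hf : Continuous f) :
    ∃ l, 0 < l ∧ ∫ ω, Φ (|f ω| / l) ∂μ ≤ 1 := by
  obtain ⟨t, ht1, ht⟩ :=
    ((hΦ.tendsto_zero.eventually_le_const zero_lt_one).and self_mem_nhdsWithin).exists
  have ht : 0 < t := ht
  obtain ⟨B, hB⟩ := (isCompact_range hf.abs).bddAbove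
  have le_B (ω) : |f ω| ≤ max B 1 := (hB ⟨ω, rfl⟩).trans (le_max_left B 1)
  have B_pos : 0 < max B 1 := lt_max_of_lt_right one_pos
  refine ⟨max B 1 / t, by positivity, ?_⟩
  have arg_le (ω) : |f ω| / (max B 1 / t) ≤ t := by
    rw [div_div_eq_mul_div, div_le_iff₀ B_pos, mul_comm]
    exact mul_le_mul_of_nonneg_left (le_B ω) ht.le
  have arg_nonneg (ω) : 0 ≤ |f ω| / (max B 1 / t) := by positivity
  calc ∫ ω, Φ (|f ω| / (max B 1 / t)) ∂μ ≤ ∫ _, (1 : ℝ) ∂μ :=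
        integral_mono_of_nonneg (.of_forall fun ω => hΦ.nonneg _ (arg_nonneg ω))
          (integrable_const _)
          (.of_forall fun ω => (hΦ.mono (arg_nonneg ω) ht.le (arg_le ω)).trans ht1)
    _ = 1 := by simp

lemma le_luxNorm (hΦ : IsPhiPrefun Φ) (hf : Continuous f)
    (h : ∀ l, 0 < l → ∫ ω, Φ (|f ω| / l) ∂μ ≤ 1 → s ≤ l) : s ≤ luxNorm μ Φ f :=
  le_csInf (hΦ.exists_integral_le_one hf) fun l hl => h l hl.1 hl.2

variable [BorelSpace Ω]

lemma integrable_comp_abs_div (hΦ : IsPhiPrefun Φ) (hq : 0 < q) (hdec : DecQ Φ q)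
    (hf : Continuous f) (hl : 0 < l) : Integrable (fun ω => Φ (|f ω| / l)) μ :=
  integrable_of_continuous (hΦ.continuous_comp_abs_div hq hdec hf hl)

lemma integral_comp_abs_div_le_rpow_mul (hΦ : IsPhiPrefun Φ) (hq : 0 < q) (hdec : DecQ Φ q)
    (hf : Continuous f) (hs : 0 < s) (ht : 0 < t) (hc : 1 ≤ c) (hsc : s ≤ c * t) :
    ∫ ω, Φ (|f ω| / t) ∂μ ≤ c ^ q * ∫ ω, Φ (|f ω| / s) ∂μ := by
  rw [← integral_const_mul]
  refine integral_mono (hΦ.integrable_comp_abs_div hq hdec hf ht)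
    ((hΦ.integrable_comp_abs_div hq hdec hf hs).const_mul _) fun ω => ?_
  have arg_le : |f ω| / t ≤ c * (|f ω| / s) := by
    rw [← mul_div_assoc, div_le_div_iff₀ ht hs]
    nlinarith [mul_le_mul_of_nonneg_left hsc (abs_nonneg (f ω))]
  have arg_nonneg : 0 ≤ |f ω| / t := by positivity
  exact (hΦ.mono arg_nonneg (arg_nonneg.trans arg_le) arg_le).trans
    (hΦ.map_mul_le hq hdec (by positivity) hc)

lemma integral_comp_abs_div_luxNorm (hΦ : IsPhiPrefun Φ) (hq : 0 < q) (hdec : DecQ Φ q)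
    (hf : Continuous f) (hlux : 0 < luxNorm μ Φ f) :
    ∫ ω, Φ (|f ω| / luxNorm μ Φ f) ∂μ = 1 := by
  refine le_antisymm (le_of_forall_one_lt_le_rpow_mul (q := q) fun c hc => ?_)
    (le_of_forall_one_lt_le_rpow_mul (q := q) fun c hc => ?_)
  · obtain ⟨l, ⟨hl, hint⟩, hlt⟩ := exists_lt_of_csInf_lt (hΦ.exists_integral_le_one hf)
      (show luxNorm μ Φ f < c * luxNorm μ Φ f from lt_mul_of_one_lt_left hlux hc)
    exact (hΦ.integral_comp_abs_div_le_rpow_mul hq hdec hf hl hlux hc.le hlt.le).trans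
      (by gcongr)
  · have hpos : 0 < luxNorm μ Φ f / c := by positivity
    have hint : 1 < ∫ ω, Φ (|f ω| / (luxNorm μ Φ f / c)) ∂μ := by
      by_contra! h
      exact (luxNorm_le_of_integral_le_one hpos h).not_gt (div_lt_self hlux hc)
    exact hint.le.trans <| hΦ.integral_comp_abs_div_le_rpow_mul hq hdec hf hlux hpos hc.le
      (by rw [mul_div_cancel₀ _ (by positivity)])

lemma integral_comp_abs_div_le_of_le (hΦ : IsPhiPrefun Φ) (hq : 0 < q) (hdec : DecQ Φ q)
    (ha : 1 ≤ a) (hinc : AIncP Φ 1 a) (hf : Continuous f) (ht : 0 < t) (hts : t ≤ s) :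
    ∫ ω, Φ (|f ω| / s) ∂μ ≤ a * (t / s) * ∫ ω, Φ (|f ω| / t) ∂μ := by
  have hs := ht.trans_le hts
  rw [← integral_const_mul]
  refine integral_mono (hΦ.integrable_comp_abs_div hq hdec hf hs)
    ((hΦ.integrable_comp_abs_div hq hdec hf ht).const_mul _) fun ω => ?_
  rcases (abs_nonneg (f ω)).eq_or_lt with h | h
  · simp [← h, hΦ.map_zero]
  have hle := hΦ.le_mul_div_rpow_mul ha hinc (s := |f ω| / s) (t := |f ω| / t) (by positivity)
    (by gcongr) (by positivity)
  rwa [div_div_div_cancel_left' _ _ h.ne', Real.rpow_one] at hle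

lemma luxNorm_le_mul (hΦ : IsPhiPrefun Φ) (hq : 0 < q) (hdec : DecQ Φ q) (ha : 1 ≤ a)
    (hinc : AIncP Φ 1 a) (hf : Continuous f) (hl : 0 < l) (hc : 1 ≤ c)
    (hint : ∫ ω, Φ (|f ω| / l) ∂μ ≤ c) : luxNorm μ Φ f ≤ a * c * l := by
  have one_le : 1 ≤ a * c := one_le_mul_of_one_le_of_one_le ha hc
  refine luxNorm_le_of_integral_le_one (by positivity) ?_
  calc ∫ ω, Φ (|f ω| / (a * c * l)) ∂μ ≤ a * (l / (a * c * l)) * ∫ ω, Φ (|f ω| / l) ∂μ :=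
        hΦ.integral_comp_abs_div_le_of_le hq hdec ha hinc hf hl
          (le_mul_of_one_le_left hl.le one_le)
    _ ≤ a * (l / (a * c * l)) * c := by gcongr
    _ = 1 := by field_simp

lemma mul_le_luxNorm (hΦ : IsPhiPrefun Φ) (hq : 0 < q) (hdec : DecQ Φ q) (ha : 1 ≤ a)
    (hinc : AIncP Φ 1 a) (hf : Continuous f) (hl : 0 < l) (hc : c ≤ 1)
    (hint : c ≤ ∫ ω, Φ (|f ω| / l) ∂μ) : a⁻¹ * c * l ≤ luxNorm μ Φ f := by
  refine hΦ.le_luxNorm hf fun t ht htint => ?_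
  rw [mul_assoc, inv_mul_le_iff₀ (by positivity)]
  rcases le_total t l with htl | hlt
  · rw [← le_div_iff₀ hl]
    calc c ≤ a * (t / l) * ∫ ω, Φ (|f ω| / t) ∂μ :=
          hint.trans (hΦ.integral_comp_abs_div_le_of_le hq hdec ha hinc hf ht htl)
      _ ≤ a * (t / l) * 1 := by gcongr
      _ = a * t / l := by ring
  · nlinarith

end IsPhiPrefun

lemma discLuxNorm_eq_luxNorm_empiricalMeasure {Ω : Type*} [MeasurableSpace Ω] {Φ : ℝ → ℝ}
    {f : Ω → ℝ} {m : ℕ} (x : Fin m → Ω) (hf : ∀ l, 0 < l → Measurable fun ω => Φ (|f ω| / l)) :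
    discLuxNorm Φ x f = luxNorm (empiricalMeasure x) Φ f := by
  refine congrArg sInf (Set.ext fun l => and_congr_right fun hl => ?_)
  rw [integral_empiricalMeasure x (hf l hl), Fintype.card_fin]

/-- Once the mean of `Φ (|f| / ‖f‖_Φ)`, which is `1`, is reproduced up to `ε`, the almost
monotonicity of `Φ t / t` converts this into a comparison of the norms. -/
lemma IsPhiPrefun.discLuxNorm_bounds {Ω : Type*} [TopologicalSpace Ω] [CompactSpace Ω]
    [MeasurableSpace Ω] [BorelSpace Ω] {μ : Measure Ω} [IsProbabilityMeasure μ] {Φ : ℝ → ℝ}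
    {f : Ω → ℝ} {q a ε M : ℝ} {m : ℕ} [NeZero m] {x : Fin m → Ω} (hΦ : IsPhiPrefun Φ)
    (hq : 0 < q) (hdec : DecQ Φ q) (ha : 1 ≤ a) (hinc : AIncP Φ 1 a) (hf : Continuous f)
    (hε : 0 ≤ ε) (hM : 0 < M)
    (hsup : ∀ l, 0 < l → ∫ ω, Φ (|f ω| / l) ∂μ ≤ 1 → ∀ ω, |f ω| ≤ l * M)
    (hx : ∀ l, 0 < l → ∫ ω, Φ (|f ω| / l) ∂μ ≤ 1 →
      sampleDeviation μ (fun ω => Φ (|f ω| / l)) x ≤ ε * m) :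
    a⁻¹ * (1 - ε) * luxNorm μ Φ f ≤ discLuxNorm Φ x f ∧
      discLuxNorm Φ x f ≤ a * (1 + ε) * luxNorm μ Φ f := by
  have hmeas (l) (hl : 0 < l) : Measurable fun ω => Φ (|f ω| / l) :=
    (hΦ.continuous_comp_abs_div hq hdec hf hl).measurable
  rw [discLuxNorm_eq_luxNorm_empiricalMeasure x hmeas]
  rcases eq_or_ne f 0 with rfl | hf₀
  · simp [luxNorm_zero hΦ.map_zero]
  obtain ⟨ω₀, hω₀⟩ := Function.ne_iff.mp hf₀
  have hlux : 0 < luxNorm μ Φ f :=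
    (div_pos (abs_pos.mpr hω₀) hM).trans_le <| hΦ.le_luxNorm hf fun l hl hint =>
      (div_le_iff₀ hM).mpr (hsup l hl hint ω₀)
  have hint := hΦ.integral_comp_abs_div_luxNorm hq hdec hf hlux
  have hm : (0 : ℝ) < m := by exact_mod_cast Nat.pos_of_neZero m
  have hdev := abs_le.mp (hx _ hlux hint.le)
  rw [hint, mul_one, Fintype.card_fin] at hdev
  refine ⟨hΦ.mul_le_luxNorm hq hdec ha hinc hf hlux (by linarith) ?_,
    hΦ.luxNorm_le_mul hq hdec ha hinc hf hlux (by linarith) ?_⟩ <;>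
  rw [integral_empiricalMeasure x (hmeas _ hlux), Fintype.card_fin]
  · rw [le_div_iff₀ hm]
    linarith
  · rw [div_le_iff₀ hm]
    linarith

/-! ### The sampling theorem -/

lemma AIncP.mono_exponent {Φ : ℝ → ℝ} {p θ a : ℝ} (hinc : AIncP Φ p a)
    (hΦ : ∀ t, 0 ≤ t → 0 ≤ Φ t) (ha : 0 ≤ a) (hθ : θ ≤ p) : AIncP Φ θ a := by
  intro s t hs hst
  have ht := hs.trans hst
  have split (y : ℝ) (hy : 0 < y) : Φ y / y ^ θ = Φ y / y ^ p * y ^ (p - θ) := by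
    rw [Real.rpow_sub hy]
    field_simp
  rw [split s hs, split t ht, ← mul_assoc]
  have hΦt := hΦ t ht.le
  gcongr
  exact hinc s t hs hst

lemma one_le_logb_two_mul {x : ℝ} (hx : 1 ≤ x) : 1 ≤ Real.logb 2 (2 * x) := by
  rw [Real.le_logb_iff_rpow_le one_lt_two (by positivity), Real.rpow_one]
  linarith

lemma clog_two_le_logb (N : ℕ) (hN : 1 ≤ N) : (Nat.clog 2 N : ℝ) ≤ Real.logb 2 (2 * N) := by
  have hN : (1 : ℝ) ≤ N := by exact_mod_cast hN
  have hlog : 0 ≤ Real.logb 2 N := Real.logb_nonneg one_lt_two hN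
  have hceil : (Nat.clog 2 N : ℝ) = ⌈Real.logb 2 N⌉₊ := by
    rw [← Real.natCeil_logb_natCast 2 N, Nat.cast_two]
  rw [hceil, Real.logb_mul two_ne_zero (by positivity), Real.logb_self_eq_one one_lt_two, add_comm]
  exact (Nat.ceil_lt_add_one hlog).le

namespace HasGrowth

variable {Φ : ℝ → ℝ} {θ A q a : ℝ}

lemma map_supBound_le (hΦ : HasGrowth Φ θ A q) {H : ℝ} (hH : 0 ≤ H) :
    Φ (supBound Φ θ A H) ≤ momentBound Φ A ^ q * Φ (H ^ (2 / θ)) :=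
  hΦ.toIsPhiPrefun.map_mul_le hΦ.q_pos hΦ.dec (by positivity) hΦ.one_le_momentBound

lemma map_supBound_le_rpow (hΦ : HasGrowth Φ θ A q) {H : ℝ} (hH : 1 ≤ H) :
    Φ (supBound Φ θ A H) ≤ momentBound Φ A ^ q * Φ 1 * (2 * H ^ 2) ^ q := by
  have hK := hΦ.one_le_momentBound
  have hΦ1 := hΦ.pos one_pos
  have rpow_le : H ^ (2 / θ) ≤ 2 * H ^ 2 := by
    calc H ^ (2 / θ) ≤ H ^ (2 : ℝ) :=
          Real.rpow_le_rpow_of_exponent_le hH (div_le_self zero_le_two hΦ.one_lt_θ.le)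
      _ ≤ 2 * H ^ 2 := by
          rw [Real.rpow_two]
          linarith [sq_nonneg H]
  calc Φ (supBound Φ θ A H) ≤ momentBound Φ A ^ q * Φ (H ^ (2 / θ)) :=
        hΦ.map_supBound_le (by positivity)
    _ ≤ momentBound Φ A ^ q * ((H ^ (2 / θ)) ^ q * Φ 1) := by
        gcongr
        simpa using hΦ.toIsPhiPrefun.map_mul_le hΦ.q_pos hΦ.dec zero_le_one
          (Real.one_le_rpow hH (div_pos two_pos hΦ.θ_pos).le)
    _ ≤ momentBound Φ A ^ q * ((2 * H ^ 2) ^ q * Φ 1) := by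
        gcongr
        exact hΦ.q_pos.le
    _ = momentBound Φ A ^ q * Φ 1 * (2 * H ^ 2) ^ q := by ring

lemma exists_isLargeExponent (hΦ : HasGrowth Φ θ A q) :
    ∃ C, 0 < C ∧ ∀ H, 1 ≤ H → ∃ r, IsLargeExponent Φ θ A H r ∧ r ≤ C * Real.logb 2 (2 * H ^ 2) := by
  have hq := hΦ.one_le_q
  set B := max 1 (momentBound Φ A ^ q * Φ 1)
  have B_pos : 0 < B := lt_max_of_lt_left one_pos
  have logb_B : 0 ≤ Real.logb 2 B := Real.logb_nonneg one_lt_two (le_max_left _ _)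
  refine ⟨Real.logb 2 B + q + 3, by positivity, fun H hH => ?_⟩
  have one_le_sq : 1 ≤ H ^ 2 := one_le_pow₀ hH
  have hlog := one_le_logb_two_mul one_le_sq
  set lH := Real.logb 2 (2 * H ^ 2) with hlH
  have sum_nonneg : 0 ≤ Real.logb 2 B + q * lH := by positivity
  refine ⟨⌈Real.logb 2 B + q * lH⌉₊ + 2, ?_, ?_⟩
  · have mul_rpow_le : B * (2 * H ^ 2) ^ q ≤ 2 ^ (⌈Real.logb 2 B + q * lH⌉₊ + 2) := by
      calc B * (2 * H ^ 2) ^ q = 2 ^ (Real.logb 2 B + q * lH) := by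
            rw [Real.rpow_add two_pos, mul_comm q, Real.rpow_mul zero_le_two, hlH,
              Real.rpow_logb two_pos (by norm_num) B_pos,
              Real.rpow_logb two_pos (by norm_num) (by positivity)]
        _ ≤ (2 : ℝ) ^ ((⌈Real.logb 2 B + q * lH⌉₊ + 2 : ℕ) : ℝ) := by
            refine Real.rpow_le_rpow_of_exponent_le one_le_two ?_
            push_cast
            linarith [Nat.le_ceil (Real.logb 2 B + q * lH)]
        _ = 2 ^ (⌈Real.logb 2 B + q * lH⌉₊ + 2) := Real.rpow_natCast _ _
    refine ⟨by omega, ?_, ?_⟩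
    · calc H ^ 2 ≤ (2 * H ^ 2) ^ q :=
            (by linarith : H ^ 2 ≤ 2 * H ^ 2).trans (Real.self_le_rpow_of_one_le (by linarith) hq)
        _ ≤ B * (2 * H ^ 2) ^ q := le_mul_of_one_le_left (by positivity) (le_max_left _ _)
        _ ≤ _ := mul_rpow_le
    · refine ((hΦ.map_supBound_le_rpow hH).trans ?_).trans mul_rpow_le
      gcongr
      exact le_max_right _ _
  · push_cast
    nlinarith [Nat.ceil_lt_add_one sum_nonneg]

lemma exists_chainingConst_le (hΦ : HasGrowth Φ θ A q) :
    ∃ C, 0 < C ∧ ∀ H, 1 ≤ H → ∀ N : ℕ, 1 ≤ N → ∃ r, IsLargeExponent Φ θ A H r ∧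
      chainingConst Φ θ A q H r N ≤
        C * Φ (H ^ (2 / θ)) * Real.logb 2 (2 * N) ^ 2 * Real.logb 2 (2 * H ^ 2) := by
  obtain ⟨C, hC, hr⟩ := hΦ.exists_isLargeExponent
  have hA := hΦ.A_pos
  have hq := hΦ.q_pos
  have hK : 0 < momentBound Φ A := zero_lt_one.trans_le hΦ.one_le_momentBound
  refine ⟨10 ^ 8 * q ^ 2 * A * momentBound Φ A * C * 18 ^ 2 * momentBound Φ A ^ q, by positivity,
    fun H hH N hN => ?_⟩
  obtain ⟨r, hrH, hrC⟩ := hr H hH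
  refine ⟨r, hrH, ?_⟩
  have hlogH := one_le_logb_two_mul (one_le_pow₀ hH : 1 ≤ H ^ 2)
  have hlogN := one_le_logb_two_mul (x := N) (by exact_mod_cast hN)
  have map_le := hΦ.map_supBound_le (zero_le_one.trans hH)
  have map_nonneg := (hΦ.pos (zero_lt_one.trans_le (hΦ.one_le_supBound hH))).le
  have clog_le : 2 * (Nat.clog 2 N : ℝ) + 16 ≤ 18 * Real.logb 2 (2 * N) := by
    linarith [clog_two_le_logb N hN]
  calc chainingConst Φ θ A q H r N
      ≤ 10 ^ 8 * q ^ 2 * A * momentBound Φ A * (C * Real.logb 2 (2 * H ^ 2)) *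
          (18 * Real.logb 2 (2 * N)) ^ 2 * (momentBound Φ A ^ q * Φ (H ^ (2 / θ))) := by
        unfold chainingConst
        gcongr
    _ = _ := by ring

variable {Ω : Type*} [TopologicalSpace Ω] [CompactSpace Ω] [SecondCountableTopology Ω]
  [MeasurableSpace Ω] [BorelSpace Ω] {μ : Measure Ω} [IsProbabilityMeasure μ]
  {X : Submodule ℝ (Ω → ℝ)} {H ε : ℝ} {N r m : ℕ}

lemma exists_discLuxNorm_bounds [NeZero m] (hΦ : HasGrowth Φ θ A q) (ha : 1 ≤ a)
    (hinc : AIncP Φ 1 a) (hX : ∀ f ∈ X, Continuous f) (hN : Module.finrank ℝ X = N) (hN₀ : N ≠ 0)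
    (hH : 1 ≤ H) (hsup : ∀ f ∈ X, supNorm f ≤ H * √(∫ ω, f ω ^ 2 ∂μ))
    (hr : IsLargeExponent Φ θ A H r) (hε : 0 < ε) (hε2 : ε ≤ 1 / 2)
    (hm : 16 * chainingConst Φ θ A q H r N / ε ^ 2 ≤ m) :
    ∃ x : Fin m → Ω, ∀ f ∈ X, a⁻¹ * (1 - ε) * luxNorm μ Φ f ≤ discLuxNorm Φ x f ∧
      discLuxNorm Φ x f ≤ a * (1 + ε) * luxNorm μ Φ f := by
  have hH₀ : 0 ≤ H := by linarith
  obtain ⟨u, hu, hrep⟩ := exists_isParsevalFrame hX hN hN₀ hH₀ hsup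
  obtain ⟨x, hx⟩ := hΦ.exists_forall_sampleDeviation_le (κ := Fin m) hu hH hr hε hε2
    (by rwa [finrank_euclideanSpace_fin, Fintype.card_fin])
  refine ⟨x, fun f hf => ?_⟩
  obtain ⟨z, hz⟩ := hrep f hf
  have abs_div_eq (l : ℝ) (hl : 0 < l) (ω : Ω) : |f ω| / l = |inner ℝ (u ω) (l⁻¹ • z)| := by
    rw [real_inner_smul_right, ← hz, abs_mul, abs_inv, abs_of_pos hl, div_eq_inv_mul]
  have mem_phiBall (l : ℝ) (hl : 0 < l) (hint : ∫ ω, Φ (|f ω| / l) ∂μ ≤ 1) :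
      l⁻¹ • z ∈ phiBall μ Φ u := by
    simpa only [phiBall, Set.mem_ofPred_eq, abs_div_eq l hl] using hint
  refine hΦ.toIsPhiPrefun.discLuxNorm_bounds hΦ.q_pos hΦ.dec ha hinc (hX f hf) hε.le
    (zero_lt_one.trans_le (hΦ.one_le_supBound hH)) (fun l hl hint ω => ?_) fun l hl hint => ?_
  · rw [← div_le_iff₀' hl, abs_div_eq l hl]
    exact hΦ.abs_inner_le_supBound hu hH₀ (mem_phiBall l hl hint) ω
  · simpa only [abs_div_eq l hl, Fintype.card_fin] using hx _ (mem_phiBall l hl hint)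

end HasGrowth

theorem statement1_general (p : ℝ) (hp : 1 < p) (Φ : ℝ → ℝ) (hpre : IsPhiPrefun Φ)
    (a1 : ℝ) (ha1 : 1 ≤ a1) (hA1 : AIncP Φ 1 a1) (aP : ℝ) (haP : 1 ≤ aP) (hAp : AIncP Φ p aP)
    (q : ℝ) (hq : 1 ≤ q) (hdec : DecQ Φ q) :
    ∃ C : ℝ, 0 < C ∧
      ∀ (Ω : Type*) [TopologicalSpace Ω] [CompactSpace Ω] [SecondCountableTopology Ω]
        [MeasurableSpace Ω] [BorelSpace Ω] (μ : Measure Ω) [IsProbabilityMeasure μ],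
      ∀ N : ℕ, 1 ≤ N → ∀ H : ℝ, 1 ≤ H →
      ∀ X : Submodule ℝ (Ω → ℝ),
        (∀ f ∈ X, Continuous f) →
        Module.finrank ℝ X = N →
        (∀ f ∈ X, supNorm f ≤ H * √(∫ y, f y ^ 2 ∂μ)) →
      ∀ ε : ℝ, 0 < ε → ε ≤ 1 / 2 →
      ∀ m : ℕ,
        C * ε⁻¹ ^ 2 * Φ (H ^ (2 / min p 2)) * Real.logb 2 (2 * N) ^ 2 *
            Real.logb 2 (2 * H ^ 2) ≤ m →
        ∃ x : Fin m → Ω, ∀ f ∈ X,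
          a1⁻¹ * (1 - ε) * luxNorm μ Φ f ≤ discLuxNorm Φ x f ∧
          discLuxNorm Φ x f ≤ a1 * (1 + ε) * luxNorm μ Φ f := by
  have hΦ : HasGrowth Φ (min p 2) aP q :=
    ⟨hpre, lt_min hp one_lt_two, min_le_right p 2, haP,
      hAp.mono_exponent hpre.nonneg (by linarith) (min_le_left p 2), hq, hdec⟩
  obtain ⟨C, hC, hr⟩ := hΦ.exists_chainingConst_le
  refine ⟨16 * C, by positivity, fun Ω _ _ _ _ _ μ _ N hN H hH X hX hXN hsup ε hε hε2 m hm => ?_⟩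
  obtain ⟨r, hrH, hrC⟩ := hr H hH N hN
  have hΦH := hΦ.pos (Real.rpow_pos_of_pos (zero_lt_one.trans_le hH) (2 / min p 2))
  have hlogN := one_le_logb_two_mul (x := N) (by exact_mod_cast hN)
  have hlogH := one_le_logb_two_mul (one_le_pow₀ hH : 1 ≤ H ^ 2)
  have hm₀ : (0 : ℝ) < m := lt_of_lt_of_le (by positivity) hm
  have : NeZero m := ⟨by exact_mod_cast hm₀.ne'⟩
  refine hΦ.exists_discLuxNorm_bounds ha1 hA1 hX hXN (by omega) hH hsup hrH hε hε2 ?_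
  calc 16 * chainingConst Φ (min p 2) aP q H r N / ε ^ 2
      ≤ 16 * (C * Φ (H ^ (2 / min p 2)) * Real.logb 2 (2 * N) ^ 2 * Real.logb 2 (2 * H ^ 2)) /
          ε ^ 2 := by gcongr
    _ = 16 * C * ε⁻¹ ^ 2 * Φ (H ^ (2 / min p 2)) * Real.logb 2 (2 * N) ^ 2 *
          Real.logb 2 (2 * H ^ 2) := by
        rw [inv_pow]
        ring
    _ ≤ m := hm

lemma one_le_logb_two_inv_rpow {ε s : ℝ} (hε : 0 < ε) (hε2 : ε ≤ 1 / 2) (hs : 0 ≤ s) :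
    1 ≤ Real.logb 2 ε⁻¹ ^ s := by
  refine Real.one_le_rpow ?_ hs
  rw [Real.le_logb_iff_rpow_le one_lt_two (by positivity), Real.rpow_one,
    le_inv_comm₀ two_pos hε, ← one_div]
  exact hε2

/-- Theorem 3.1 / cor4.1. Let `p ∈ (1,∞)` and let `Φ` be a Φ-function with
`Φ ∈ (aInc)_p` (constant `a_Φ(p)`) and `Φ ∈ (Dec)_q`, `q ∈ [1,∞)`. There is `C = C_{Φ,p} > 0`
such that for every compact `Ω ⊂ ℝ^d` with Borel probability measure `μ`, every `N ≥ 1`,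
`H ≥ 1`, every `N`-dimensional `X_N ∈ NI_{2,∞}(H)`, every `ε ∈ (0,1/2]` and every
`m ≥ C ε^{-2} (log₂ ε⁻¹)^{min{p,2}/2} Φ(H^{2/min{p,2}}) (log₂ 2N)² log₂ 2H²`, there are
points `x₁,…,x_m ∈ Ω` with
`a_Φ(1)⁻¹ (1−ε) ‖f‖_Φ ≤ ‖f‖_{Φ,x} ≤ a_Φ(1) (1+ε) ‖f‖_Φ` for all `f ∈ X_N`. -/
theorem statement1 (p : ℝ) (hp : 1 < p)
    (Φ : ℝ → ℝ) (hpre : IsPhiPrefun Φ)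
    (a1 : ℝ) (ha1 : 1 ≤ a1) (hA1 : AIncP Φ 1 a1)
    (aP : ℝ) (haP : 1 ≤ aP) (hAp : AIncP Φ p aP)
    (q : ℝ) (hq : 1 ≤ q) (hdec : DecQ Φ q) :
    ∃ C : ℝ, 0 < C ∧
      ∀ (d : ℕ) (Ω : Set (Fin d → ℝ)), IsCompact Ω →
      ∀ (μ : Measure Ω), IsProbabilityMeasure μ →
      ∀ N : ℕ, 1 ≤ N → ∀ H : ℝ, 1 ≤ H →
      ∀ X : Submodule ℝ (Ω → ℝ),
        (∀ f ∈ X, Continuous f) →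
        Module.finrank ℝ X = N →
        (∀ f ∈ X, supNorm f ≤ H * Real.sqrt (∫ y, (f y) ^ 2 ∂μ)) →
      ∀ ε : ℝ, 0 < ε → ε ≤ 1 / 2 →
      ∀ m : ℕ,
        C * ε⁻¹ ^ 2 * (Real.logb 2 ε⁻¹) ^ (min p 2 / 2) * Φ (H ^ (2 / min p 2)) *
            (Real.logb 2 (2 * N)) ^ 2 * Real.logb 2 (2 * H ^ 2) ≤ (m : ℝ) →
        ∃ x : Fin m → Ω, ∀ f ∈ X,
          a1⁻¹ * (1 - ε) * luxNorm μ Φ f ≤ discLuxNorm Φ x f ∧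
          discLuxNorm Φ x f ≤ a1 * (1 + ε) * luxNorm μ Φ f := by
  obtain ⟨C, hC, h⟩ := statement1_general p hp Φ hpre a1 ha1 hA1 aP haP hAp q hq hdec
  refine ⟨C, hC, fun d Ω hΩ μ _ N hN H hH X hX hXN hsup ε hε hε2 m hm => ?_⟩
  have : CompactSpace Ω := isCompact_iff_compactSpace.mp hΩ
  refine h Ω μ N hN H hH X hX hXN hsup ε hε hε2 m (le_trans ?_ hm)
  have hΦH := hpre.nonneg (H ^ (2 / min p 2)) (by positivity)
  have hlogN := one_le_logb_two_mul (x := N) (by exact_mod_cast hN)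
  have hlogH := one_le_logb_two_mul (one_le_pow₀ hH : 1 ≤ H ^ 2)
  gcongr ?_ * _ * _ * _
  exact le_mul_of_one_le_right (by positivity)
    (one_le_logb_two_inv_rpow hε hε2 (div_pos (lt_min (by linarith) two_pos) two_pos).le)
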